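/- arXiv:1911.11505 — 6 statements merged into one kernel-verified Lean document; each statement's English description precedes it below -/
import Mathlib

section
/- Let r ≥ 1 and m ≥ 0 be integers, let q₀, q₁, …, q_r : (0,∞) → ℂ be functions, and let f : (0,∞) → ℂ be a function that is (at least) r times differentiable. Let θ denote the operator (θ g)(t) = t·g′(t), let L = Σ_{i=0}^{r} q_i(t)·θ^{r−i}, and for 0 ≤ s ≤ r let L^{(s)} = Σ_{i=0}^{r−s} q_i(t)·(r−i)·(r−i−1)⋯(r−i−s+1)·θ^{r−i−s} (the s-th formal derivative of L with respect to θ). Then for every t > 0, L applied to the function t ↦ ((log t)^m / m!)·f(t) equals Σ_{s=0}^{m} ((log t)^{m−s}/(m−s)!)·(1/s!)·(L^{(s)} f)(t), where for s > r the operator L^{(s)} is zero. -/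
/-- The Euler operator `θ g = t·g′` acting on functions `(0,∞) → ℂ` (as total
functions `ℝ → ℂ`, using the real derivative). -/
noncomputable def theta (g : ℝ → ℂ) : ℝ → ℂ := fun t => (t : ℂ) * deriv g t

/-!
Since `θ` is a derivation, the Leibniz rule for `θ^n` and `(n)_s = s! · C(n, s)` give, for every
`g`, the operator identity `L (g f) = ∑ₛ θ^s g · (1/s!) · L^{(s)} f`. The theorem is the case
`g = (log t)^m / m!`, on which `θ = d / d(log t)` acts by lowering `m` by one.
-/

open Finset

section Theta

variable {U : Set ℝ} {f g : ℝ → ℂ} {n : ℕ} {t : ℝ}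

theorem theta_zero : theta 0 = 0 := by
  ext t
  simp [theta]

theorem theta_mul (hg : DifferentiableAt ℝ g t) (hf : DifferentiableAt ℝ f t) :
    theta (fun x => g x * f x) t = theta g t * f t + g t * theta f t := by
  simp only [theta, deriv_fun_mul hg hf]
  ring

theorem theta_sum_const_mul {ι : Type*} {s : Finset ι} (c : ι → ℂ) {u : ι → ℝ → ℂ}
    (hu : ∀ i ∈ s, DifferentiableAt ℝ (u i) t) :
    theta (fun x => ∑ i ∈ s, c i * u i x) t = ∑ i ∈ s, c i * theta (u i) t := by
  simp only [theta]
  rw [deriv_fun_sum fun i hi => (hu i hi).const_mul (c i), mul_sum]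
  refine sum_congr rfl fun i hi => ?_
  rw [deriv_const_mul _ (hu i hi), mul_left_comm]

theorem eqOn_theta (h : Set.EqOn f g U) (hU : IsOpen U) : Set.EqOn (theta f) (theta g) U :=
  fun t ht => congrArg ((t : ℂ) * ·) (h.deriv hU ht)

theorem eqOn_iterate_theta (h : Set.EqOn f g U) (hU : IsOpen U) (n : ℕ) :
    Set.EqOn (theta^[n] f) (theta^[n] g) U := by
  induction n with
  | zero => exact h
  | succ n ih =>
    simp only [Function.iterate_succ_apply']
    exact eqOn_theta ih hU

theorem iterate_theta_mul (hU : IsOpen U)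
    (hg : ∀ k < n, DifferentiableOn ℝ (theta^[k] g) U)
    (hf : ∀ k < n, DifferentiableOn ℝ (theta^[k] f) U) :
    Set.EqOn (theta^[n] fun x => g x * f x)
      (fun x => ∑ ij ∈ antidiagonal n,
        (n.choose ij.1 : ℂ) * (theta^[ij.1] g x * theta^[ij.2] f x)) U := by
  induction n with
  | zero => intro t _; simp
  | succ n ih =>
    intro t ht
    beta_reduce
    have hdiff {h : ℝ → ℂ} (hh : ∀ k < n + 1, DifferentiableOn ℝ (theta^[k] h) U)
        {k : ℕ} (hk : k < n + 1) : DifferentiableAt ℝ (theta^[k] h) t :=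
      (hh k hk).differentiableAt (hU.mem_nhds ht)
    have hg' {ij : ℕ × ℕ} (hij : ij ∈ antidiagonal n) := hdiff hg (Nat.antidiagonal.fst_lt hij)
    have hf' {ij : ℕ × ℕ} (hij : ij ∈ antidiagonal n) := hdiff hf (Nat.antidiagonal.snd_lt hij)
    have ih := ih (fun k hk => hg k (by lia)) (fun k hk => hf k (by lia))
    rw [Function.iterate_succ_apply', eqOn_theta ih hU ht,
      theta_sum_const_mul _ fun ij hij => (hg' hij).fun_mul (hf' hij),
      sum_antidiagonal_choose_succ_mul (fun i j => theta^[i] g t * theta^[j] f t),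
      ← sum_add_distrib]
    refine sum_congr rfl fun ij hij => ?_
    rw [theta_mul (hg' hij) (hf' hij), ← Nat.choose_symm_of_eq_add (mem_antidiagonal.1 hij).symm,
      Function.iterate_succ_apply', Function.iterate_succ_apply']
    ring

theorem iterate_deriv_theta (hU : IsOpen U)
    (hf : ∀ k ≤ n, DifferentiableOn ℝ (deriv^[k] f) U) :
    Set.EqOn (deriv^[n] (theta f)) (fun t => t * deriv^[n + 1] f t + n * deriv^[n] f t) U := by
  induction n with
  | zero => intro t _; simp [theta]
  | succ n ih =>
    intro t ht
    have hderiv (k : ℕ) (hk : k ≤ n + 1) : HasDerivAt (deriv^[k] f) (deriv^[k + 1] f t) t := by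
      rw [Function.iterate_succ_apply']
      exact ((hf k hk).differentiableAt (hU.mem_nhds ht)).hasDerivAt
    have hid : HasDerivAt (fun x : ℝ => (x : ℂ)) 1 t := (hasDerivAt_id t).ofReal_comp
    rw [Function.iterate_succ_apply', (ih fun k hk => hf k (by lia)).deriv hU ht,
      ((hid.fun_mul (hderiv (n + 1) le_rfl)).fun_add
        ((hderiv n n.le_succ).const_mul (n : ℂ))).deriv]
    push_cast
    ring

theorem differentiableOn_iterate_deriv_theta (hU : IsOpen U)
    (hf : ∀ k ≤ n + 1, DifferentiableOn ℝ (deriv^[k] f) U) :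
    DifferentiableOn ℝ (deriv^[n] (theta f)) U := by
  have hid : DifferentiableOn ℝ (fun x : ℝ => (x : ℂ)) U :=
    Complex.ofRealCLM.differentiable.differentiableOn
  exact ((hid.fun_mul (hf (n + 1) le_rfl)).fun_add
    ((hf n n.le_succ).const_mul (n : ℂ))).congr
      (iterate_deriv_theta hU fun k hk => hf k (by lia))

theorem differentiableOn_iterate_theta (hU : IsOpen U)
    (hf : ∀ k ≤ n, DifferentiableOn ℝ (deriv^[k] f) U) :
    DifferentiableOn ℝ (theta^[n] f) U := by
  induction n generalizing f with
  | zero => exact hf 0 le_rfl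
  | succ n ih =>
    exact ih fun k hk => differentiableOn_iterate_deriv_theta hU fun j hj => hf j (by lia)

end Theta

section LogDividedPow

/-- The divided logarithmic power `(log t)^m / m!`, as a complex number. -/
noncomputable def logDividedPow (m : ℕ) (t : ℝ) : ℂ :=
  ((Real.log t ^ m / m.factorial : ℝ) : ℂ)

theorem logDividedPow_zero : logDividedPow 0 = fun _ => 1 := by
  ext t
  simp [logDividedPow]

theorem hasDerivAt_logDividedPow_succ (m : ℕ) {t : ℝ} (ht : t ≠ 0) :
    HasDerivAt (logDividedPow (m + 1)) (logDividedPow m t / t) t := by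
  refine (((Real.hasDerivAt_log ht).pow (m + 1)).div_const
    ((m + 1).factorial : ℝ)).ofReal_comp.congr_deriv ?_
  rw [logDividedPow, ← Complex.ofReal_div, Nat.factorial_succ]
  congr 1
  push_cast
  field_simp

theorem differentiableOn_logDividedPow (m : ℕ) :
    DifferentiableOn ℝ (logDividedPow m) {0}ᶜ := by
  cases m with
  | zero => rw [logDividedPow_zero]; exact differentiableOn_const 1
  | succ m =>
    exact fun t ht => (hasDerivAt_logDividedPow_succ m ht).differentiableAt.differentiableWithinAt

theorem theta_logDividedPow_zero : theta (logDividedPow 0) = 0 := by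
  ext t
  simp [theta, logDividedPow_zero]

theorem theta_logDividedPow_succ (m : ℕ) :
    Set.EqOn (theta (logDividedPow (m + 1))) (logDividedPow m) {0}ᶜ := fun t ht => by
  rw [theta, (hasDerivAt_logDividedPow_succ m ht).deriv,
    mul_div_cancel₀ _ (Complex.ofReal_ne_zero.2 ht)]

theorem iterate_theta_logDividedPow (m k : ℕ) :
    Set.EqOn (theta^[k] (logDividedPow m)) (if k ≤ m then logDividedPow (m - k) else 0) {0}ᶜ := by
  induction k generalizing m with
  | zero => intro t _; simp
  | succ k ih =>
    cases m with
    | zero =>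
      rw [Function.iterate_succ_apply, theta_logDividedPow_zero,
        Function.iterate_fixed theta_zero]
      exact fun t _ => by simp
    | succ m =>
      simpa using (eqOn_iterate_theta (theta_logDividedPow_succ m) isOpen_compl_singleton k).trans
        (ih m)

theorem differentiableOn_iterate_theta_logDividedPow (m k : ℕ) :
    DifferentiableOn ℝ (theta^[k] (logDividedPow m)) {0}ᶜ := by
  refine DifferentiableOn.congr ?_ (iterate_theta_logDividedPow m k)
  split_ifs
  · exact differentiableOn_logDividedPow (m - k)
  · exact differentiableOn_const 0

end LogDividedPow

section ThetaOperator

variable {r : ℕ} {q : ℕ → ℝ → ℂ} {U : Set ℝ} {f g : ℝ → ℂ} {t : ℝ}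

/-- The differential operator `L = ∑_{i=0}^r q_i(t) θ^{r-i}`. -/
noncomputable def thetaOperator (r : ℕ) (q : ℕ → ℝ → ℂ) (f : ℝ → ℂ) (t : ℝ) : ℂ :=
  ∑ i ∈ range (r + 1), q i t * theta^[r - i] f t

/-- The `s`-th formal `θ`-derivative `L^{(s)}` of `L = thetaOperator r q`. For `s > r` the
truncated subtractions leave one term, `i = 0`, whose coefficient `r.descFactorial s` vanishes. -/
noncomputable def thetaOperatorDeriv (r : ℕ) (q : ℕ → ℝ → ℂ) (s : ℕ) (f : ℝ → ℂ) (t : ℝ) : ℂ :=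
  ∑ i ∈ range (r - s + 1), q i t * ((r - i).descFactorial s : ℂ) * theta^[r - i - s] f t

theorem thetaOperatorDeriv_eq_sum_range_succ (r : ℕ) (q : ℕ → ℝ → ℂ) (s : ℕ) (f : ℝ → ℂ)
    (t : ℝ) :
    thetaOperatorDeriv r q s f t =
      ∑ i ∈ range (r + 1), q i t * ((r - i).descFactorial s : ℂ) * theta^[r - i - s] f t := by
  refine sum_subset (range_mono (by lia)) fun i hi hi' => ?_
  rw [mem_range] at hi hi'
  simp [Nat.descFactorial_of_lt (show r - i < s by lia)]

theorem thetaOperatorDeriv_of_lt {s : ℕ} (h : r < s) : thetaOperatorDeriv r q s f t = 0 := by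
  rw [thetaOperatorDeriv_eq_sum_range_succ]
  refine sum_eq_zero fun i _ => ?_
  simp [Nat.descFactorial_of_lt ((r.sub_le i).trans_lt h)]

theorem iterate_theta_mul_eq_sum_range {n : ℕ} (hn : n ≤ r) (hU : IsOpen U)
    (hg : ∀ k < n, DifferentiableOn ℝ (theta^[k] g) U)
    (hf : ∀ k < n, DifferentiableOn ℝ (theta^[k] f) U) (ht : t ∈ U) :
    theta^[n] (fun x => g x * f x) t =
      ∑ s ∈ range (r + 1), (n.choose s : ℂ) * (theta^[s] g t * theta^[n - s] f t) := by
  rw [iterate_theta_mul hU hg hf ht]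
  beta_reduce
  rw [Nat.sum_antidiagonal_eq_sum_range_succ
    fun i j => (n.choose i : ℂ) * (theta^[i] g t * theta^[j] f t)]
  refine sum_subset (range_mono (by lia)) fun s _ hs => ?_
  rw [Nat.choose_eq_zero_of_lt (by simpa using hs), Nat.cast_zero, zero_mul]

theorem thetaOperator_mul (hU : IsOpen U)
    (hg : ∀ k < r, DifferentiableOn ℝ (theta^[k] g) U)
    (hf : ∀ k < r, DifferentiableOn ℝ (theta^[k] f) U) (ht : t ∈ U) :
    thetaOperator r q (fun x => g x * f x) t =
      ∑ s ∈ range (r + 1),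
        theta^[s] g t * (1 / (s.factorial : ℂ)) * thetaOperatorDeriv r q s f t := by
  have leibniz (i : ℕ) := iterate_theta_mul_eq_sum_range (r.sub_le i) hU
    (fun k hk => hg k (by lia)) (fun k hk => hf k (by lia)) ht
  simp only [thetaOperator, thetaOperatorDeriv_eq_sum_range_succ, leibniz, mul_sum]
  rw [sum_comm]
  refine sum_congr rfl fun s _ => sum_congr rfl fun i _ => ?_
  have hs : (s.factorial : ℂ) ≠ 0 := Nat.cast_ne_zero.2 s.factorial_ne_zero
  rw [Nat.descFactorial_eq_factorial_mul_choose]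
  push_cast
  field_simp

theorem thetaOperator_mul_of_iterate_theta_eq_zero {m : ℕ} (hU : IsOpen U)
    (hg : ∀ k < r, DifferentiableOn ℝ (theta^[k] g) U)
    (hf : ∀ k < r, DifferentiableOn ℝ (theta^[k] f) U) (ht : t ∈ U)
    (hzero : ∀ s > m, theta^[s] g t = 0) :
    thetaOperator r q (fun x => g x * f x) t =
      ∑ s ∈ range (m + 1),
        theta^[s] g t * (1 / (s.factorial : ℂ)) * thetaOperatorDeriv r q s f t := by
  rw [thetaOperator_mul hU hg hf ht,
    ← eventually_constant_sum (fun s hs => by rw [thetaOperatorDeriv_of_lt hs, mul_zero])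
      (le_max_left (r + 1) (m + 1)),
    eventually_constant_sum (fun s hs => by rw [hzero s hs, zero_mul, zero_mul])
      (le_max_right (r + 1) (m + 1))]

end ThetaOperator

/-- for `L = ∑_{i=0}^r q_i(t) θ^{r-i}` and its formal `θ`-derivatives
`L^{(s)} = ∑_{i=0}^{r-s} q_i(t) (r-i)(r-i-1)⋯(r-i-s+1) θ^{r-i-s}` (zero for `s > r`),
one has `L((log t)^m/m! · f) = ∑_{s=0}^m (log t)^{m-s}/(m-s)! · (1/s!) · (L^{(s)} f)`
for every `t > 0`, whenever `f` is (at least) `r` times differentiable on `(0,∞)`. -/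
theorem stmt_3 (r m : ℕ) (hr : 1 ≤ r) (q : ℕ → ℝ → ℂ) (f : ℝ → ℂ)
    (hf : ∀ k < r, DifferentiableOn ℝ (deriv^[k] f) (Set.Ioi 0)) :
    ∀ t : ℝ, 0 < t →
      (∑ i ∈ Finset.range (r + 1),
          q i t * theta^[r - i] (fun s : ℝ => ((Real.log s ^ m / m.factorial : ℝ) : ℂ) * f s) t)
        = ∑ s ∈ Finset.range (m + 1),
            ((Real.log t ^ (m - s) / (m - s).factorial : ℝ) : ℂ) * (1 / (s.factorial : ℂ)) *
              (∑ i ∈ Finset.range (r - s + 1),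
                q i t * ((r - i).descFactorial s : ℂ) * theta^[r - i - s] f t) := by
  intro t ht
  have hlog : ∀ k < r, DifferentiableOn ℝ (theta^[k] (logDividedPow m)) (Set.Ioi 0) := fun k _ =>
    (differentiableOn_iterate_theta_logDividedPow m k).mono fun _ hx => ne_of_gt hx
  have hf' : ∀ k < r, DifferentiableOn ℝ (theta^[k] f) (Set.Ioi 0) := fun k hk =>
    differentiableOn_iterate_theta isOpen_Ioi fun j hj => hf j (hj.trans_lt hk)
  have hzero : ∀ s > m, theta^[s] (logDividedPow m) t = 0 := fun s hs => by
    rw [iterate_theta_logDividedPow m s ht.ne', if_neg hs.not_ge, Pi.zero_apply]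
  calc
    _ = ∑ s ∈ range (m + 1), theta^[s] (logDividedPow m) t * (1 / (s.factorial : ℂ)) *
          thetaOperatorDeriv r q s f t :=
      thetaOperator_mul_of_iterate_theta_eq_zero isOpen_Ioi hlog hf' ht hzero
    _ = ∑ s ∈ range (m + 1), logDividedPow (m - s) t * (1 / (s.factorial : ℂ)) *
          thetaOperatorDeriv r q s f t :=
      sum_congr rfl fun s hs => by
        rw [iterate_theta_logDividedPow m s ht.ne', if_pos (mem_range_succ_iff.1 hs)]
end

section
/- (Key Lemma, limit formula.) Let r ≥ 1, 0 < ρ ≤ 1, Δ = {t ∈ ℂ : |t| < ρ}, and H = {z ∈ ℂ : Im z > (1/2π)·log(1/ρ)}, e(z) := exp(2πi z). Let u₀, …, u_{r−1} : Δ → ℂ and v₀, …, v_{r−1} : Δ → ℂ all be holomorphic on Δ (in particular each v_j is analytic at t = 0), define u(z) = Σ_{k=0}^{r−1} u_k(e(z))·z^k on H, let γ, N and π_z be as follows: (γw)(z) = w(z+1), N u = Σ_{h=1}^{r−1} ((−1)^{h−1}/h)(γ−I)^h u, and π_z(w) = Σ_{j=0}^{r−1} (v_j(e(z))/(2πi)^j)·w^{(j)}(z).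 Then the function z ↦ Σ_{h=0}^{r−1} ((−z)^h/h!)·π_z(N^h u) converges, as Im z → +∞, to the limit Σ_{j=0}^{r−1} v_j(0)·u_j(0)·j!/(2πi)^j. -/
/-- The universal covering map `e(z) = exp(2πi z)` of the punctured disc. -/
noncomputable def ee (z : ℂ) : ℂ := Complex.exp (2 * Real.pi * Complex.I * z)

/-- The translation-minus-identity operator `(γ - I)w : z ↦ w(z+1) - w(z)`. -/
noncomputable def Tshift (w : ℂ → ℂ) : ℂ → ℂ := fun z => w (z + 1) - w z

/-- `N = log γ = ∑_{h=1}^{r-1} ((-1)^{h-1}/h)(γ - I)^h`, the logarithm of the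
monodromy (a finite sum on functions killed by `(γ - I)^r`). -/
noncomputable def Nlog (r : ℕ) (w : ℂ → ℂ) : ℂ → ℂ :=
  fun z => ∑ h ∈ Finset.Icc 1 (r - 1), ((-1 : ℂ) ^ (h - 1) / h) * Tshift^[h] w z

/-- The linear functional `π_z` with symbol `∑_j v_j(t) θ^j`:
`π_z(w) = ∑_{j=0}^{r-1} (v_j(e(z))/(2πi)^j)·w^{(j)}(z)`. -/
noncomputable def piFun (r : ℕ) (vc : ℕ → ℂ → ℂ) (z : ℂ) (w : ℂ → ℂ) : ℂ :=
  ∑ j ∈ Finset.range r, vc j (ee z) / (2 * Real.pi * Complex.I) ^ j * iteratedDeriv j w z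

/-! The coefficients `u_k ∘ e` are `1`-periodic, so `N` is linear over them, and on polynomials of
degree `< r` it is `d/dz` because `γ = exp (d/dz)`. Hence `exp (-zN)` turns `∑ u_k(e(y)) y^k` into
`∑ u_k(e(y)) (y - z)^k`, and by Leibniz its `j`-th derivative at `y = z` is
`∑ (j!/(j-k)!) (u_k ∘ e)^(j-k)(z)`. As `d/dz` acts on functions of `t = e(z)` as `2πi·θ` with
`θ = t·d/dt`, all derivatives of positive order vanish in the limit, and only `k = j` survives. -/

section Polynomial

open Polynomial

variable {R K : Type*} [CommRing R] [Field K] [CharZero K]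

theorem descPochhammer_eval_neg_one (n : ℕ) :
    (descPochhammer R n).eval (-1) = (-1) ^ n * (n.factorial : R) := by
  induction n with
  | zero => simp
  | succ n ih =>
    rw [descPochhammer_succ_eval, ih, Nat.factorial_succ]
    push_cast
    ring

theorem derivative_descPochhammer_succ_eval_zero (n : ℕ) :
    (derivative (descPochhammer R (n + 1))).eval 0 = (-1) ^ n * (n.factorial : R) := by
  simp [descPochhammer_succ_left, derivative_mul, descPochhammer_eval_neg_one]

theorem eval_natCast_add_eq_sum_fwdDiff {P : R[X]} {r n : ℕ} (hP : P.natDegree < r) (hn : r ≤ n)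
    (z : R) :
    P.eval (n + z) = ∑ h ∈ Finset.range r, n.choose h • (fwdDiff 1)^[h] P.eval z := by
  rw [add_comm, ← nsmul_one n, shift_eq_sum_fwdDiff_iter (1 : R) P.eval n z]
  refine (Finset.sum_subset (Finset.range_mono (by lia)) fun h _ hh => ?_).symm
  have hdeg : P.natDegree < h := hP.trans_le (by simpa using hh)
  rw [fwdDiff_iter_eq_zero_of_degree_lt hdeg, Pi.zero_apply, smul_zero]

theorem taylor_eq_sum_fwdDiff_descPochhammer {P : K[X]} {r : ℕ} (hP : P.natDegree < r) (z : K) :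
    taylor z P = ∑ h ∈ Finset.range r,
      C ((fwdDiff 1)^[h] P.eval z / (h.factorial : K)) * descPochhammer K h := by
  refine eq_of_infinite_eval_eq _ _
    (((Set.Ici_infinite r).image Nat.cast_injective.injOn).mono ?_)
  rintro _ ⟨n, hn, rfl⟩
  rw [Set.mem_ofPred_eq, taylor_eval, eval_natCast_add_eq_sum_fwdDiff hP hn, eval_finsetSum]
  refine Finset.sum_congr rfl fun h _ => ?_
  rw [eval_mul, eval_C, descPochhammer_eval_eq_descFactorial,
    Nat.descFactorial_eq_factorial_mul_choose, nsmul_eq_mul, Nat.cast_mul]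
  field_simp [h.factorial_ne_zero]

theorem derivative_eval_eq_sum_fwdDiff {P : K[X]} {r : ℕ} (hP : P.natDegree < r) (z : K) :
    (derivative P).eval z =
      ∑ h ∈ Finset.Icc 1 (r - 1), (-1 : K) ^ (h - 1) / h * (fwdDiff 1)^[h] P.eval z := by
  obtain ⟨s, rfl⟩ : ∃ s, r = s + 1 := ⟨r - 1, by lia⟩
  have hderiv := congrArg (fun Q => (derivative Q).eval 0)
    (taylor_eq_sum_fwdDiff_descPochhammer hP z)
  simp only [taylor_apply, derivative_comp, derivative_sum, derivative_C_mul, eval_finsetSum,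
    eval_mul, eval_comp, eval_add, eval_X, eval_C, derivative_add, derivative_X, derivative_C,
    zero_add, add_zero, one_mul] at hderiv
  rw [hderiv, Finset.sum_range_succ', descPochhammer_zero, derivative_one, eval_zero, mul_zero,
    add_zero, Nat.add_sub_cancel, ← Finset.Ico_add_one_right_eq_Icc, Finset.sum_Ico_eq_sum_range]
  refine Finset.sum_congr rfl fun h _ => ?_
  rw [derivative_descPochhammer_succ_eval_zero, add_comm 1 h, Nat.add_sub_cancel,
    Nat.factorial_succ, Nat.cast_mul]
  field_simp [h.factorial_ne_zero, h.succ_ne_zero]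

theorem sum_pow_div_factorial_mul_iterate_derivative_eval {P : K[X]} {r : ℕ}
    (hP : P.natDegree < r) (a z : K) :
    ∑ h ∈ Finset.range r, a ^ h / (h.factorial : K) * (derivative^[h] P).eval z =
      P.eval (a + z) := by
  rw [← taylor_eval, eval_eq_sum_range' (n := r) (by rwa [natDegree_taylor])]
  refine Finset.sum_congr rfl fun h _ => ?_
  rw [taylor_coeff, ← factorial_smul_hasseDeriv, LinearMap.smul_apply, eval_smul, nsmul_eq_mul]
  field_simp [h.factorial_ne_zero]

end Polynomial

theorem iteratedDeriv_mul_sub_pow {𝕜 : Type*} [NontriviallyNormedField 𝕜] {f : 𝕜 → 𝕜} {z : 𝕜}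
    {j : ℕ} (hf : ContDiffAt 𝕜 j f z) (k : ℕ) :
    iteratedDeriv j (fun y => f y * (y - z) ^ k) z =
      j.descFactorial k * iteratedDeriv (j - k) f z := by
  have hpow (i : ℕ) : iteratedDeriv i (fun y => (y - z) ^ k) z =
      if i = k then (k.factorial : 𝕜) else 0 := by
    rw [iteratedDeriv_comp_sub_const (f := fun y => y ^ k)]
    simp only [sub_self, iteratedDeriv_fun_pow_zero, Nat.cast_ite, Nat.cast_zero]
  rw [iteratedDeriv_fun_mul hf (by fun_prop)]
  simp only [hpow]
  rcases lt_or_ge j k with hjk | hkj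
  · rw [Nat.descFactorial_eq_zero_iff_lt.2 hjk, Nat.cast_zero, zero_mul]
    exact Finset.sum_eq_zero fun i _ => by rw [if_neg (by lia), mul_zero]
  · rw [Finset.sum_eq_single_of_mem (j - k) (by simp)
      fun i hi hik => by rw [if_neg (by grind), mul_zero],
      if_pos (by lia), Nat.choose_symm hkj, Nat.descFactorial_eq_factorial_mul_choose,
      Nat.cast_mul]
    ring

section Monodromy

open Polynomial

variable {ι : Type*} {s : Finset ι} {f w : ι → ℂ → ℂ} {r : ℕ}

theorem Tshift_iterate_sum_mul (hf : ∀ k ∈ s, Function.Periodic (f k) 1) (h : ℕ) :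
    Tshift^[h] (fun z => ∑ k ∈ s, f k z * w k z) =
      fun z => ∑ k ∈ s, f k z * Tshift^[h] (w k) z := by
  induction h generalizing w with
  | zero => rfl
  | succ h ih =>
    have hstep : Tshift (fun z => ∑ k ∈ s, f k z * w k z) =
        fun z => ∑ k ∈ s, f k z * Tshift (w k) z := by
      funext z
      rw [Tshift, ← Finset.sum_sub_distrib]
      exact Finset.sum_congr rfl fun k hk => by rw [hf k hk, Tshift, mul_sub]
    simp only [Function.iterate_succ_apply, hstep, ih]

theorem Nlog_sum_mul (hf : ∀ k ∈ s, Function.Periodic (f k) 1) :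
    Nlog r (fun z => ∑ k ∈ s, f k z * w k z) = fun z => ∑ k ∈ s, f k z * Nlog r (w k) z := by
  funext z
  simp only [Nlog, Tshift_iterate_sum_mul hf, Finset.mul_sum]
  rw [Finset.sum_comm]
  exact Finset.sum_congr rfl fun k _ => Finset.sum_congr rfl fun h _ => mul_left_comm _ _ _

theorem Nlog_eval {P : ℂ[X]} (hP : P.natDegree < r) : Nlog r P.eval = (derivative P).eval :=
  funext fun z => (derivative_eval_eq_sum_fwdDiff hP z).symm

theorem Nlog_iterate_sum_mul_eval (hf : ∀ k ∈ s, Function.Periodic (f k) 1) {P : ι → ℂ[X]}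
    (hP : ∀ k ∈ s, (P k).natDegree < r) (h : ℕ) :
    (Nlog r)^[h] (fun z => ∑ k ∈ s, f k z * (P k).eval z) =
      fun z => ∑ k ∈ s, f k z * (derivative^[h] (P k)).eval z := by
  induction h generalizing P with
  | zero => rfl
  | succ h ih =>
    have hstep : Nlog r (fun z => ∑ k ∈ s, f k z * (P k).eval z) =
        fun z => ∑ k ∈ s, f k z * (derivative (P k)).eval z := by
      rw [Nlog_sum_mul hf (w := fun k => (P k).eval)]
      exact funext fun z => Finset.sum_congr rfl fun k hk => by rw [Nlog_eval (hP k hk)]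
    rw [Function.iterate_succ_apply, hstep]
    exact ih fun k hk => (natDegree_derivative_le _).trans_lt (by grind)

theorem sum_pow_div_factorial_mul_Nlog_iterate (hf : ∀ k ∈ s, Function.Periodic (f k) 1)
    {P : ι → ℂ[X]} (hP : ∀ k ∈ s, (P k).natDegree < r) (a y : ℂ) :
    ∑ h ∈ Finset.range r,
        a ^ h / h.factorial * (Nlog r)^[h] (fun z => ∑ k ∈ s, f k z * (P k).eval z) y =
      ∑ k ∈ s, f k y * (P k).eval (a + y) := by
  simp only [Nlog_iterate_sum_mul_eval hf hP, Finset.mul_sum]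
  rw [Finset.sum_comm]
  refine Finset.sum_congr rfl fun k hk => ?_
  rw [← sum_pow_div_factorial_mul_iterate_derivative_eval (hP k hk) a y, Finset.mul_sum]
  exact Finset.sum_congr rfl fun h _ => mul_left_comm _ _ _

theorem contDiffAt_Nlog_iterate_sum_mul_eval (hf : ∀ k ∈ s, Function.Periodic (f k) 1)
    {P : ι → ℂ[X]} (hP : ∀ k ∈ s, (P k).natDegree < r) {n : WithTop ℕ∞} {z : ℂ}
    (hfz : ∀ k ∈ s, ContDiffAt ℂ n (f k) z) (h : ℕ) :
    ContDiffAt ℂ n ((Nlog r)^[h] (fun z => ∑ k ∈ s, f k z * (P k).eval z)) z := by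
  rw [Nlog_iterate_sum_mul_eval hf hP]
  refine ContDiffAt.sum fun k hk => (hfz k hk).mul ?_
  simpa only [coe_aeval_eq_eval] using
    (contDiff_aeval (𝕜 := ℂ) (derivative^[h] (P k)) n).contDiffAt (x := z)

theorem piFun_sum_const_mul (vc : ℕ → ℂ → ℂ) (c : ι → ℂ) {z : ℂ}
    (hw : ∀ k ∈ s, ContDiffAt ℂ r (w k) z) :
    piFun r vc z (fun y => ∑ k ∈ s, c k * w k y) = ∑ k ∈ s, c k * piFun r vc z (w k) := by
  have hderiv : ∀ j ∈ Finset.range r, iteratedDeriv j (fun y => ∑ k ∈ s, c k * w k y) z =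
      ∑ k ∈ s, c k * iteratedDeriv j (w k) z := fun j hj => by
    have hjr : (j : WithTop ℕ∞) ≤ r := by exact_mod_cast (Finset.mem_range.1 hj).le
    rw [iteratedDeriv_fun_sum fun k hk => contDiffAt_const.mul ((hw k hk).of_le hjr)]
    simp only [iteratedDeriv_const_mul_field]
  simp only [piFun, Finset.mul_sum]
  rw [Finset.sum_comm]
  refine Finset.sum_congr rfl fun j hj => ?_
  rw [hderiv j hj, Finset.mul_sum]
  exact Finset.sum_congr rfl fun k _ => mul_left_comm _ _ _

theorem sum_piFun_Nlog_iterate {f : ℕ → ℂ → ℂ} (hf : ∀ k < r, Function.Periodic (f k) 1)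
    (vc : ℕ → ℂ → ℂ) {z : ℂ} (hfz : ∀ k < r, ContDiffAt ℂ r (f k) z) :
    ∑ h ∈ Finset.range r, (-z) ^ h / h.factorial *
        piFun r vc z ((Nlog r)^[h] fun y => ∑ k ∈ Finset.range r, f k y * y ^ k) =
      ∑ j ∈ Finset.range r, vc j (ee z) / (2 * Real.pi * Complex.I) ^ j *
        ∑ k ∈ Finset.range r, j.descFactorial k * iteratedDeriv (j - k) (f k) z := by
  simp only [← Finset.mem_range] at hf hfz
  have hdeg : ∀ k ∈ Finset.range r, (X ^ k : ℂ[X]).natDegree < r := by simp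
  have hpow : (fun y => ∑ k ∈ Finset.range r, f k y * y ^ k) =
      fun y => ∑ k ∈ Finset.range r, f k y * (X ^ k : ℂ[X]).eval y := by simp
  rw [hpow, ← piFun_sum_const_mul vc _
    fun h _ => contDiffAt_Nlog_iterate_sum_mul_eval hf hdeg hfz h]
  simp only [sum_pow_div_factorial_mul_Nlog_iterate hf hdeg]
  simp only [eval_pow, eval_X, neg_add_eq_sub, piFun]
  refine Finset.sum_congr rfl fun j hj => ?_
  have hfj : ∀ k ∈ Finset.range r, ContDiffAt ℂ j (f k) z := fun k hk =>
    (hfz k hk).of_le (by exact_mod_cast (Finset.mem_range.1 hj).le)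
  rw [iteratedDeriv_fun_sum fun k hk => (hfj k hk).mul (by fun_prop)]
  exact congrArg _ (Finset.sum_congr rfl fun k hk => iteratedDeriv_mul_sub_pow (hfj k hk) k)

end Monodromy

section EulerOperator

/-- The Euler operator `θ = t·d/dt`, through which `d/dz` acts on functions of `t = e(z)`. -/
noncomputable def eulerOp (f : ℂ → ℂ) : ℂ → ℂ := fun t => t * deriv f t

theorem analyticAt_eulerOp_iterate {f : ℂ → ℂ} {t : ℂ} (hf : AnalyticAt ℂ f t) (m : ℕ) :
    AnalyticAt ℂ (eulerOp^[m] f) t := by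
  induction m generalizing f with
  | zero => exact hf
  | succ _ ih => exact ih (analyticAt_id.mul hf.deriv)

theorem eulerOp_iterate_zero_of_ne_zero (f : ℂ → ℂ) {m : ℕ} (hm : m ≠ 0) :
    eulerOp^[m] f 0 = 0 := by
  obtain ⟨m, rfl⟩ := Nat.exists_eq_succ_of_ne_zero hm
  rw [Function.iterate_succ_apply', eulerOp, zero_mul]

theorem ee_eq_qParam : ee = Function.Periodic.qParam 1 := by
  funext z
  simp [ee, Function.Periodic.qParam]

theorem ee_periodic : Function.Periodic ee 1 := by
  intro z
  rw [ee, ee, mul_add, mul_one, Complex.exp_add, Complex.exp_two_pi_mul_I, mul_one]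

theorem contDiff_ee {n : WithTop ℕ∞} : ContDiff ℂ n ee :=
  ee_eq_qParam ▸ Function.Periodic.contDiff_qParam n

theorem hasDerivAt_ee (z : ℂ) : HasDerivAt ee (2 * Real.pi * Complex.I * ee z) z :=
  ((hasDerivAt_id z).const_mul (2 * Real.pi * Complex.I)).cexp.congr_deriv
    (by rw [mul_one, mul_comm]; rfl)

theorem iteratedDeriv_comp_ee {f : ℂ → ℂ} {z : ℂ} (hf : AnalyticAt ℂ f (ee z)) (m : ℕ) :
    iteratedDeriv m (f ∘ ee) z = (2 * Real.pi * Complex.I) ^ m * eulerOp^[m] f (ee z) := by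
  induction m generalizing z with
  | zero => simp
  | succ m ih =>
    have hnear : iteratedDeriv m (f ∘ ee) =ᶠ[nhds z]
        fun y => (2 * Real.pi * Complex.I) ^ m * (eulerOp^[m] f ∘ ee) y :=
      ((hasDerivAt_ee z).continuousAt.eventually hf.eventually_analyticAt).mono fun y hy => ih hy
    have hderiv := (analyticAt_eulerOp_iterate hf m).differentiableAt.hasDerivAt.comp z
      (hasDerivAt_ee z)
    rw [iteratedDeriv_succ, hnear.deriv_eq, (hderiv.const_mul _).deriv,
      Function.iterate_succ_apply', eulerOp]
    ring

end EulerOperator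

section ImTendstoInfinity

open Filter Topology

local notation "I∞" => comap Complex.im atTop

theorem eventually_eventually_nhds_comap_atTop {α β : Type*} [TopologicalSpace α] [LinearOrder β]
    [TopologicalSpace β] [ClosedIicTopology β] [NoMaxOrder β] [Nonempty β] {g : α → β}
    (hg : Continuous g) {p : α → Prop} (hp : ∀ᶠ x in comap g atTop, p x) :
    ∀ᶠ x in comap g atTop, ∀ᶠ y in 𝓝 x, p y := by
  have hbasis := (atTop_basis_Ioi (α := β)).comap g
  obtain ⟨a, -, ha⟩ := hbasis.eventually_iff.1 hp
  exact hbasis.eventually_iff.2 ⟨a, trivial, fun x hx =>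
    ((isOpen_Ioi.preimage hg).eventually_mem hx).mono fun _ hy => ha hy⟩

theorem Tshift_iterate_congr {w w' : ℂ → ℂ} (hw : w =ᶠ[I∞] w') (h : ℕ) :
    Tshift^[h] w =ᶠ[I∞] Tshift^[h] w' := by
  have hshift : Tendsto (fun z : ℂ => z + 1) I∞ I∞ := by
    simpa [tendsto_comap_iff, Function.comp_def] using tendsto_comap
  induction h generalizing w w' with
  | zero => exact hw
  | succ _ ih => exact ih ((hw.comp_tendsto hshift).sub hw)

theorem Nlog_iterate_congr {w w' : ℂ → ℂ} (hw : w =ᶠ[I∞] w') (r h : ℕ) :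
    (Nlog r)^[h] w =ᶠ[I∞] (Nlog r)^[h] w' := by
  induction h generalizing w w' with
  | zero => exact hw
  | succ _ ih =>
    refine ih ?_
    have hT := (eventually_all_finset (Finset.Icc 1 (r - 1))).2
      fun k _ => Tshift_iterate_congr hw k
    filter_upwards [hT] with z hz
    exact Finset.sum_congr rfl fun k hk => by rw [hz k hk]

theorem piFun_congr {w w' : ℂ → ℂ} (hw : w =ᶠ[I∞] w') (r : ℕ) (vc : ℕ → ℂ → ℂ) :
    (fun z => piFun r vc z w) =ᶠ[I∞] fun z => piFun r vc z w' := by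
  filter_upwards [eventually_eventually_nhds_comap_atTop Complex.continuous_im hw] with z hz
  exact Finset.sum_congr rfl fun j _ => by rw [EventuallyEq.iteratedDeriv_eq j hz]

theorem tendsto_ee : Tendsto ee I∞ (𝓝 0) :=
  ee_eq_qParam ▸ (Function.Periodic.qParam_tendsto one_pos).mono_right nhdsWithin_le_nhds

theorem tendsto_iteratedDeriv_comp_ee {f : ℂ → ℂ} (hf : AnalyticAt ℂ f 0) (m : ℕ) :
    Tendsto (iteratedDeriv m (f ∘ ee)) I∞ (𝓝 (if m = 0 then f 0 else 0)) := by
  have hlim := ((analyticAt_eulerOp_iterate hf m).continuousAt.tendsto.comp tendsto_ee).const_mul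
    ((2 * Real.pi * Complex.I) ^ m)
  have hval : (2 * Real.pi * Complex.I) ^ m * eulerOp^[m] f 0 = if m = 0 then f 0 else 0 := by
    split_ifs with hm
    · simp [hm]
    · rw [eulerOp_iterate_zero_of_ne_zero f hm, mul_zero]
  rw [hval] at hlim
  refine hlim.congr' ?_
  filter_upwards [tendsto_ee.eventually hf.eventually_analyticAt] with z hz
  exact (iteratedDeriv_comp_ee hz m).symm

theorem tendsto_sum_descFactorial_mul_iteratedDeriv_comp_ee {r : ℕ} {uc : ℕ → ℂ → ℂ}
    (huc : ∀ k < r, AnalyticAt ℂ (uc k) 0) {j : ℕ} (hj : j < r) :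
    Tendsto (fun z => ∑ k ∈ Finset.range r,
        (j.descFactorial k : ℂ) * iteratedDeriv (j - k) (uc k ∘ ee) z) I∞
      (𝓝 (j.factorial * uc j 0)) := by
  have hval : ∑ k ∈ Finset.range r,
      (j.descFactorial k : ℂ) * (if j - k = 0 then uc k 0 else 0) = j.factorial * uc j 0 := by
    rw [Finset.sum_eq_single_of_mem j (Finset.mem_range.2 hj), Nat.sub_self, if_pos rfl,
      Nat.descFactorial_self]
    intro k _ hkj
    rcases hkj.lt_or_gt with hlt | hgt
    · rw [if_neg (by lia), mul_zero]
    · rw [Nat.descFactorial_eq_zero_iff_lt.2 hgt, Nat.cast_zero, zero_mul]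
  rw [← hval]
  exact tendsto_finsetSum _ fun k hk =>
    (tendsto_iteratedDeriv_comp_ee (huc k (Finset.mem_range.1 hk)) (j - k)).const_mul _

theorem eventually_sum_piFun_Nlog_iterate_eq {r : ℕ} {uc : ℕ → ℂ → ℂ} (vc : ℕ → ℂ → ℂ)
    (huc : ∀ k < r, AnalyticAt ℂ (uc k) 0) {u : ℂ → ℂ}
    (hu : ∀ᶠ z in I∞, u z = ∑ k ∈ Finset.range r, uc k (ee z) * z ^ k) :
    ∀ᶠ z in I∞,
      ∑ h ∈ Finset.range r, (-z) ^ h / h.factorial * piFun r vc z ((Nlog r)^[h] u) =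
        ∑ j ∈ Finset.range r, vc j (ee z) / (2 * Real.pi * Complex.I) ^ j *
          ∑ k ∈ Finset.range r, j.descFactorial k * iteratedDeriv (j - k) (uc k ∘ ee) z := by
  have hanalytic := (eventually_all_finset (Finset.range r)).2 fun k hk =>
    tendsto_ee.eventually (huc k (Finset.mem_range.1 hk)).eventually_analyticAt
  have hpi := (eventually_all_finset (Finset.range r)).2 fun h _ =>
    piFun_congr (Nlog_iterate_congr hu r h) r vc
  filter_upwards [hanalytic, hpi] with z hz hpiz
  rw [← sum_piFun_Nlog_iterate (fun k _ => ee_periodic.comp (uc k)) vc fun k hk =>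
    (hz k (Finset.mem_range.2 hk)).contDiffAt.comp z contDiff_ee.contDiffAt]
  exact Finset.sum_congr rfl fun h hh => congrArg _ (hpiz h hh)

end ImTendstoInfinity

theorem stmt_7_general (r : ℕ) (uc vc : ℕ → ℂ → ℂ)
    (huc : ∀ k < r, AnalyticAt ℂ (uc k) 0) (hvc : ∀ j < r, ContinuousAt (vc j) 0)
    (u : ℂ → ℂ) (hu : ∀ᶠ z in Filter.comap Complex.im Filter.atTop,
      u z = ∑ k ∈ Finset.range r, uc k (ee z) * z ^ k) :
    Filter.Tendsto
      (fun z : ℂ =>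
        ∑ h ∈ Finset.range r, (-z) ^ h / h.factorial * piFun r vc z ((Nlog r)^[h] u))
      (Filter.comap Complex.im Filter.atTop)
      (nhds (∑ j ∈ Finset.range r,
        vc j 0 * uc j 0 * j.factorial / (2 * Real.pi * Complex.I) ^ j)) := by
  refine Filter.Tendsto.congr' ((eventually_sum_piFun_Nlog_iterate_eq vc huc hu).mono
    fun _ => Eq.symm) (tendsto_finsetSum _ fun j hj => ?_)
  have hjr := Finset.mem_range.1 hj
  have hsymbol := ((hvc j hjr).tendsto.comp tendsto_ee).div_const ((2 * Real.pi * Complex.I) ^ j)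
  have hsolution := tendsto_sum_descFactorial_mul_iteratedDeriv_comp_ee huc hjr
  convert hsymbol.mul hsolution using 2
  · rfl
  · ring

/-- Key Lemma, limit formula: if all the `v_j` are holomorphic on the
whole disc `Δ` (analytic at `t = 0`), then `∑_{h=0}^{r-1} ((-z)^h/h!)·π_z(N^h u)`
converges, as `Im z → +∞`, to `∑_{j=0}^{r-1} v_j(0)·u_j(0)·j!/(2πi)^j`. -/
theorem stmt_7 (r : ℕ) (hr : 1 ≤ r) (ρ : ℝ) (hρ0 : 0 < ρ) (hρ1 : ρ ≤ 1)
    (uc vc : ℕ → ℂ → ℂ)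
    (huc : ∀ k < r, DifferentiableOn ℂ (uc k) (Metric.ball (0 : ℂ) ρ))
    (hvc : ∀ j < r, DifferentiableOn ℂ (vc j) (Metric.ball (0 : ℂ) ρ))
    (H : Set ℂ) (hH : H = {z : ℂ | (1 / (2 * Real.pi)) * Real.log (1 / ρ) < z.im})
    (u : ℂ → ℂ) (hu : ∀ z : ℂ, u z = ∑ k ∈ Finset.range r, uc k (ee z) * z ^ k) :
    Filter.Tendsto
      (fun z : ℂ =>
        ∑ h ∈ Finset.range r, (-z) ^ h / h.factorial * piFun r vc z ((Nlog r)^[h] u))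
      (Filter.comap Complex.im Filter.atTop)
      (nhds (∑ j ∈ Finset.range r,
        vc j 0 * uc j 0 * j.factorial / (2 * Real.pi * Complex.I) ^ j)) := by
  have hball : Metric.ball (0 : ℂ) ρ ∈ nhds 0 := Metric.ball_mem_nhds 0 hρ0
  exact stmt_7_general r uc vc (fun k hk => (huc k hk).analyticAt hball)
    (fun j hj => ((hvc j hj).differentiableAt hball).continuousAt) u (.of_forall hu)
end

section
/- For every real t with 0 < t < 1, the improper integral ∫_{1}^{∞} dx/√(x(x−1)(x−t)) converges and equals π·Σ_{n=0}^{∞} ((1/2)_n / n!)²·tⁿ, i.e. the elliptic period integral of the Legendre family y² = x(x−1)(x−t) over the cycle [1, ∞) equals π·₂F₁(1/2, 1/2, 1; t). -/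
/-- `a_n = ((1/2)_n / n!)²`, where `(1/2)_n` is the Pochhammer symbol. -/
noncomputable def aCoef (n : ℕ) : ℝ :=
  ((ascPochhammer ℝ n).eval (1 / 2) / n.factorial) ^ 2

/-!
The substitution `x = 1 / u` turns the Legendre period into Euler's integral
`∫₀¹ u ^ (b - 1) * (1 - u) ^ (c - b - 1) * (1 - t * u) ^ (-a)` at `(a, b, c) = (1/2, 1/2, 1)`.
Expanding the last factor by the binomial series and integrating term by term leaves the Beta
integrals `Β(b + n, c - b) = (b)_n / (c)_n * Β(b, c - b)`, hence `Β(b, c - b) * ₂F₁(a, b; c; t)`,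
and `Β(1/2, 1/2) = π`.
-/

open Complex MeasureTheory Set

section InvSubstitution

variable {E : Type*} [NormedAddCommGroup E] [NormedSpace ℝ E] {r : ℝ}

theorem hasDerivWithinAt_inv_Ioo_zero (r : ℝ) :
    ∀ u ∈ Ioo 0 r, HasDerivWithinAt (·⁻¹) (-(u ^ 2)⁻¹) (Ioo 0 r) u :=
  fun _ hu ↦ (hasDerivAt_inv hu.1.ne').hasDerivWithinAt

theorem antitoneOn_inv_Ioo_zero (r : ℝ) : AntitoneOn (·⁻¹) (Ioo 0 r) :=
  fun _ hu _ _ huv ↦ inv_anti₀ hu.1 huv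

theorem image_inv_Ioo_zero_inv (hr : 0 < r) : (·⁻¹) '' Ioo 0 r⁻¹ = Ioi r := by
  rw [image_inv_eq_inv, inv_Ioo_0_left (inv_pos.2 hr), inv_inv]

theorem integrableOn_Ioi_iff_integrableOn_Ioo_inv (hr : 0 < r) (f : ℝ → E) :
    IntegrableOn f (Ioi r) ↔ IntegrableOn (fun u ↦ (u ^ 2)⁻¹ • f u⁻¹) (Ioo 0 r⁻¹) := by
  rw [← image_inv_Ioo_zero_inv hr,
    integrableOn_image_iff_integrableOn_deriv_smul_of_antitoneOn measurableSet_Ioo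
      (hasDerivWithinAt_inv_Ioo_zero r⁻¹) (antitoneOn_inv_Ioo_zero r⁻¹)]
  simp only [neg_neg]

theorem integral_Ioi_eq_integral_Ioo_inv (hr : 0 < r) (f : ℝ → E) :
    ∫ x in Ioi r, f x = ∫ u in Ioo 0 r⁻¹, (u ^ 2)⁻¹ • f u⁻¹ := by
  rw [← image_inv_Ioo_zero_inv hr,
    integral_image_eq_integral_deriv_smul_of_antitoneOn measurableSet_Ioo
      (hasDerivWithinAt_inv_Ioo_zero r⁻¹) (antitoneOn_inv_Ioo_zero r⁻¹)]
  simp only [neg_neg]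

end InvSubstitution

theorem integral_betaIntegrand_mul_pow (u v : ℂ) (n : ℕ) :
    ∫ x in (0 : ℝ)..1, (x : ℂ) ^ (u - 1) * (1 - (x : ℂ)) ^ (v - 1) * (x : ℂ) ^ n =
      betaIntegral (u + n) v := by
  refine intervalIntegral.integral_congr_Ioo_of_le zero_le_one fun x hx ↦ ?_
  have hx0 : (x : ℂ) ≠ 0 := ofReal_ne_zero.2 hx.1.ne'
  simp only [add_sub_right_comm, cpow_add _ _ hx0, cpow_natCast]
  ring

theorem betaIntegral_add_natCast_left {u v : ℂ} (hu : 0 < u.re) (hv : 0 < v.re) (n : ℕ) :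
    betaIntegral (u + n) v =
      (ascPochhammer ℂ n).eval u / (ascPochhammer ℂ n).eval (u + v) * betaIntegral u v := by
  have ne_neg_natCast {z : ℂ} (hz : 0 < z.re) (k : ℕ) : z ≠ -k := by
    rintro rfl
    simp only [neg_re, natCast_re, Left.neg_pos_iff] at hz
    exact hz.not_ge k.cast_nonneg
  have huv : 0 < (u + v).re := add_pos hu hv
  have hun : 0 < (u + n).re := add_pos_of_pos_of_nonneg hu n.cast_nonneg
  have Gamma_u_ne_zero := Gamma_ne_zero_of_re_pos hu
  have Gamma_uv_ne_zero := Gamma_ne_zero_of_re_pos huv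
  rw [betaIntegral_eq_Gamma_mul_div _ _ hun hv, betaIntegral_eq_Gamma_mul_div _ _ hu hv,
    ← Gamma_add_nat_div_Gamma_eq _ (ne_neg_natCast hu),
    ← Gamma_add_nat_div_Gamma_eq _ (ne_neg_natCast huv), add_right_comm]
  field_simp

theorem betaIntegral_half_half : betaIntegral (1 / 2) (1 / 2) = Real.pi := by
  rw [betaIntegral_eq_Gamma_mul_div _ _ (by norm_num) (by norm_num), add_halves, Gamma_one,
    div_one, Gamma_one_half_eq, ← cpow_add _ _ (ofReal_ne_zero.2 Real.pi_ne_zero), add_halves,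
    cpow_one]

theorem hasSum_one_sub_cpow_neg (a : ℂ) {z : ℂ} (hz : ‖z‖ < 1) :
    HasSum (fun n : ℕ ↦ (ascPochhammer ℂ n).eval a / n.factorial * z ^ n) ((1 - z) ^ (-a)) := by
  have choose_eq (n : ℕ) :
      Ring.choose (a + n - 1) n = (ascPochhammer ℂ n).eval a / n.factorial := by
    rw [← Ring.multichoose_eq, eq_div_iff (Nat.cast_ne_zero.2 n.factorial_ne_zero), mul_comm,
      ← nsmul_eq_mul, Ring.factorial_nsmul_multichoose_eq_ascPochhammer,
      Polynomial.ascPochhammer_smeval_eq_eval]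
  have h := (one_div_one_sub_cpow_hasFPowerSeriesOnBall_zero a).hasSum (y := z)
    (by simpa [enorm_eq_nnnorm, ← NNReal.coe_lt_coe] using hz)
  simpa only [FormalMultilinearSeries.ofScalars_apply_eq, smul_eq_mul, zero_add, choose_eq,
    one_div, ← cpow_neg] using h

theorem hasSum_integral_mul_tsum_mul_pow {w : ℝ → ℂ} {coeff : ℕ → ℂ}
    (hw : IntervalIntegrable w volume 0 1) (hcoeff : Summable fun n ↦ ‖coeff n‖) :
    HasSum (fun n ↦ coeff n * ∫ u in (0 : ℝ)..1, w u * u ^ n)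
      (∫ u in (0 : ℝ)..1, w u * ∑' n, coeff n * u ^ n) := by
  simp only [← intervalIntegral.integral_const_mul, mul_left_comm (coeff _)]
  have norm_term_le (n : ℕ) {u : ℝ} (hu : u ∈ uIoc 0 1) : ‖coeff n * u ^ n‖ ≤ ‖coeff n‖ := by
    rw [uIoc_of_le zero_le_one] at hu
    rw [norm_mul, norm_pow, Complex.norm_of_nonneg hu.1.le]
    exact mul_le_of_le_one_right (norm_nonneg _) (pow_le_one₀ hu.1.le hu.2)
  refine intervalIntegral.hasSum_integral_of_dominated_convergence
    (fun n u ↦ ‖w u‖ * ‖coeff n‖) (fun n ↦ ?_) (fun n ↦ .of_forall fun u hu ↦ ?_)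
    (.of_forall fun u _ ↦ hcoeff.mul_left _) ?_ (.of_forall fun u hu ↦ ?_)
  · exact hw.def'.aestronglyMeasurable.mul (by fun_prop)
  · rw [norm_mul]
    gcongr
    exact norm_term_le n hu
  · simpa only [tsum_mul_left] using hw.norm.mul_const _
  · exact (hcoeff.of_norm_bounded fun n ↦ norm_term_le n hu).hasSum.mul_left _

/-- The integrand of Euler's integral representation of `₂F₁ a b c z`, as a function of
`u ∈ (0, 1)`. All powers are principal; `1 - z * u` avoids the branch cut unless `z` is real
and `1 ≤ z`. -/
noncomputable def eulerIntegrand (a b c z : ℂ) (u : ℝ) : ℂ :=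
  u ^ (b - 1) * (1 - u) ^ (c - b - 1) * (1 - z * u) ^ (-a)

section EulerIntegral

variable {b c z : ℂ}

theorem intervalIntegrable_eulerIntegrand (a : ℂ) (hb : 0 < b.re) (hbc : b.re < c.re)
    (hz : 1 - z ∈ slitPlane) : IntervalIntegrable (eulerIntegrand a b c z) volume 0 1 := by
  refine (betaIntegral_convergent hb (by simpa)).mul_continuousOn ?_
  rw [uIcc_of_le zero_le_one]
  intro u hu
  have mem_slitPlane : 1 - z * u ∈ slitPlane := by
    convert starConvex_one_slitPlane.add_smul_mem (y := -z) hz hu.1 hu.2 using 1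
    simp [mul_comm, sub_eq_add_neg]
  exact ContinuousAt.continuousWithinAt (by fun_prop (disch := assumption))

theorem integral_eulerIntegrand (a : ℂ) (hb : 0 < b.re) (hbc : b.re < c.re) (hz : ‖z‖ < 1) :
    ∫ u in (0 : ℝ)..1, eulerIntegrand a b c z u = betaIntegral b (c - b) * ₂F₁ a b c z := by
  let coeff (n : ℕ) : ℂ := (ascPochhammer ℂ n).eval a / n.factorial * z ^ n
  have hcb : 0 < (c - b).re := by simpa
  have summable_coeff : Summable fun n ↦ ‖coeff n‖ := (hasSum_one_sub_cpow_neg a hz).summable.norm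
  have tsum_coeff {u : ℝ} (hu : u ∈ Ioo (0 : ℝ) 1) :
      ∑' n, coeff n * (u : ℂ) ^ n = (1 - z * u) ^ (-a) := by
    have norm_lt_one : ‖z * u‖ < 1 := by
      rw [norm_mul, Complex.norm_of_nonneg hu.1.le]
      exact mul_lt_one_of_nonneg_of_lt_one_left (norm_nonneg z) hz hu.2.le
    simpa only [coeff, mul_pow, mul_assoc] using (hasSum_one_sub_cpow_neg a norm_lt_one).tsum_eq
  calc ∫ u in (0 : ℝ)..1, eulerIntegrand a b c z u
      = ∫ u in (0 : ℝ)..1, (u : ℂ) ^ (b - 1) * (1 - (u : ℂ)) ^ (c - b - 1) *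
          ∑' n, coeff n * (u : ℂ) ^ n :=
        intervalIntegral.integral_congr_Ioo_of_le zero_le_one fun u hu ↦ by
          simp only [eulerIntegrand, tsum_coeff hu]
    _ = ∑' n, coeff n * betaIntegral (b + n) (c - b) := by
        simp only [← integral_betaIntegrand_mul_pow]
        exact (hasSum_integral_mul_tsum_mul_pow (betaIntegral_convergent hb hcb)
          summable_coeff).tsum_eq.symm
    _ = betaIntegral b (c - b) * ₂F₁ a b c z := by
        rw [ordinaryHypergeometric_eq_tsum, ← tsum_mul_left]
        refine tsum_congr fun n ↦ ?_
        rw [betaIntegral_add_natCast_left hb hcb, add_sub_cancel, smul_eq_mul]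
        ring

end EulerIntegral

theorem ofReal_ordinaryHypergeometric (a b c x : ℝ) :
    ((₂F₁ a b c x : ℝ) : ℂ) = ₂F₁ (a : ℂ) (b : ℂ) (c : ℂ) (x : ℂ) := by
  have eval_ofReal (n : ℕ) (y : ℝ) :
      (ascPochhammer ℂ n).eval (y : ℂ) = ((ascPochhammer ℝ n).eval y : ℝ) := by
    rw [← ascPochhammer_map ofRealHom]
    exact Polynomial.eval_map_apply ofRealHom y
  simp only [ordinaryHypergeometric_eq_tsum, eval_ofReal, smul_eq_mul, ofReal_tsum]
  norm_num

theorem ordinaryHypergeometric_half_half_one (x : ℝ) :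
    ₂F₁ (1 / 2 : ℝ) (1 / 2) 1 x = ∑' n, aCoef n * x ^ n := by
  rw [ordinaryHypergeometric_eq_tsum]
  refine tsum_congr fun n ↦ ?_
  rw [ascPochhammer_eval_one, aCoef, smul_eq_mul]
  ring

section LegendrePeriod

variable {t : ℝ}

theorem inv_sq_smul_legendre_inv (t : ℝ) {u : ℝ} (hu : u ∈ Ioo 0 1) :
    (u ^ 2)⁻¹ • (1 / √(u⁻¹ * (u⁻¹ - 1) * (u⁻¹ - t))) =
      (√u)⁻¹ * (√(1 - u))⁻¹ * (√(1 - t * u))⁻¹ := by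
  have hu0 : 0 < u := hu.1
  have h1u : 0 ≤ 1 - u := sub_nonneg.2 hu.2.le
  have cubic_inv : u⁻¹ * (u⁻¹ - 1) * (u⁻¹ - t) = u * (1 - u) * (1 - t * u) / (u ^ 2) ^ 2 := by
    field_simp
  rw [cubic_inv, Real.sqrt_div' _ (by positivity), Real.sqrt_sq (by positivity),
    Real.sqrt_mul (by positivity), Real.sqrt_mul hu0.le, smul_eq_mul]
  field_simp

theorem ofReal_inv_sqrt {x : ℝ} (hx : 0 ≤ x) : (((√x)⁻¹ : ℝ) : ℂ) = (x : ℂ) ^ (-(1 / 2) : ℂ) := by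
  rw [Real.sqrt_eq_rpow, ← Real.rpow_neg hx, ofReal_cpow hx]
  norm_num

theorem eulerIntegrand_half_half_one (ht : t < 1) {u : ℝ} (hu : u ∈ Ioo 0 1) :
    eulerIntegrand (1 / 2) (1 / 2) 1 t u =
      ((√u)⁻¹ * (√(1 - u))⁻¹ * (√(1 - t * u))⁻¹ : ℝ) := by
  have h1u : 0 ≤ 1 - u := sub_nonneg.2 hu.2.le
  have htu : 0 ≤ 1 - t * u := by nlinarith [hu.1, hu.2]
  simp only [ofReal_mul, ofReal_inv_sqrt, hu.1.le, h1u, htu, eulerIntegrand]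
  norm_num

theorem integrableOn_legendre (ht : t < 1) :
    IntegrableOn (fun x : ℝ ↦ 1 / √(x * (x - 1) * (x - t))) (Ioi 1) := by
  have one_sub_mem : 1 - (t : ℂ) ∈ slitPlane := by
    rw [← ofReal_one, ← ofReal_sub, ofReal_mem_slitPlane]
    exact sub_pos.2 ht
  have euler_integrable : IntegrableOn (eulerIntegrand (1 / 2) (1 / 2) 1 t) (Ioo 0 1) :=
    (intervalIntegrable_eulerIntegrand _ (by norm_num) (by norm_num) one_sub_mem).1.mono_set
      Ioo_subset_Ioc_self
  rw [integrableOn_Ioi_iff_integrableOn_Ioo_inv one_pos, inv_one]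
  refine IntegrableOn.congr_fun euler_integrable.re (fun u hu ↦ ?_) measurableSet_Ioo
  rw [eulerIntegrand_half_half_one ht hu, inv_sq_smul_legendre_inv t hu]
  exact ofReal_re _

theorem ofReal_integral_legendre (ht : t < 1) :
    ((∫ x in Ioi (1 : ℝ), 1 / √(x * (x - 1) * (x - t)) : ℝ) : ℂ) =
      ∫ u in (0 : ℝ)..1, eulerIntegrand (1 / 2) (1 / 2) 1 t u := by
  rw [integral_Ioi_eq_integral_Ioo_inv one_pos, inv_one, ← integral_complex_ofReal,
    intervalIntegral.integral_of_le zero_le_one, integral_Ioc_eq_integral_Ioo]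
  refine setIntegral_congr_fun measurableSet_Ioo fun u hu ↦ ?_
  rw [eulerIntegrand_half_half_one ht hu, inv_sq_smul_legendre_inv t hu]

theorem integral_legendre_eq_pi_mul_ordinaryHypergeometric (ht : |t| < 1) :
    ∫ x in Ioi (1 : ℝ), 1 / √(x * (x - 1) * (x - t)) =
      Real.pi * ₂F₁ (1 / 2 : ℝ) (1 / 2) 1 t := by
  apply ofReal_injective
  rw [ofReal_integral_legendre (lt_of_abs_lt ht),
    integral_eulerIntegrand _ (by norm_num) (by norm_num) (by simpa), sub_half,
    betaIntegral_half_half, ofReal_mul, ofReal_ordinaryHypergeometric]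
  norm_num

end LegendrePeriod

theorem stmt_11_general (t : ℝ) (ht : |t| < 1) :
    IntegrableOn (fun x : ℝ ↦ 1 / √(x * (x - 1) * (x - t))) (Ioi 1) ∧
    (∫ x in Ioi (1 : ℝ), 1 / √(x * (x - 1) * (x - t))) = Real.pi * ∑' n, aCoef n * t ^ n := by
  rw [← ordinaryHypergeometric_half_half_one]
  exact ⟨integrableOn_legendre (lt_of_abs_lt ht),
    integral_legendre_eq_pi_mul_ordinaryHypergeometric ht⟩

/-- for `0 < t < 1` the elliptic integral `∫_1^∞ dx/√(x(x-1)(x-t))`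
converges and equals `π·₂F₁(1/2,1/2,1;t) = π·∑ ((1/2)_n/n!)² tⁿ`. -/
theorem stmt_11 (t : ℝ) (ht0 : 0 < t) (ht1 : t < 1) :
    MeasureTheory.IntegrableOn
      (fun x : ℝ => 1 / Real.sqrt (x * (x - 1) * (x - t))) (Set.Ioi 1) ∧
    (∫ x in Set.Ioi (1 : ℝ), 1 / Real.sqrt (x * (x - 1) * (x - t)))
      = Real.pi * ∑' n : ℕ, aCoef n * t ^ n :=
  stmt_11_general t (by rwa [abs_of_pos ht0])
end

section
/- For every real t with 0 < t < 1, the improper integral ∫_{t}^{1} dx/√(x(1−x)(x−t)) converges and equals π·Σ_{n=0}^{∞} ((1/2)_n / n!)²·(1−t)ⁿ, that is, the elliptic integral over the cycle [t, 1] of the Legendre family equals π·₂F₁(1/2, 1/2, 1; 1−t). (This follows from the change of variable x ↦ 1 − (1−t)/x, which transforms this integral into the integral ∫_{1}^{∞} dx/√(x(x−1)(x−(1−t))).) -/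
/-!
The substitution `x = b - (b - a) sin² θ` gives `(b - x) (x - a) = ((b - a) sin θ cos θ)²`, so it
cancels the two inverse square root singularities of `dx/√((x - c) (b - x) (x - a))` against
`dx/dθ` and leaves a complete elliptic integral `K` with a continuous integrand. Expanding that
integrand by the binomial series and integrating term by term with Wallis' formula, the factor
`(1/2)_n / n!` appears twice: as a binomial coefficient and as the mean of `sin²ⁿ`.
-/

open MeasureTheory Set Real

section SineSubstitution

variable {E : Type*} [NormedAddCommGroup E] [NormedSpace ℝ E] {a b : ℝ}

theorem hasDerivAt_sub_mul_sin_sq (a b θ : ℝ) :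
    HasDerivAt (fun θ => b - (b - a) * sin θ ^ 2) (-(2 * ((b - a) * sin θ * cos θ))) θ := by
  refine ((((hasDerivAt_sin θ).pow 2).const_mul (b - a)).const_sub b).congr_deriv ?_
  norm_num
  ring

theorem deriv_smul_one_div_sqrt_sub_mul_sub_smul (hab : a < b) (f : ℝ → E) {θ x : ℝ}
    (hθ : θ ∈ Ioo 0 (π / 2)) (hx : b - (b - a) * sin θ ^ 2 = x) :
    (-(2 * ((b - a) * sin θ * cos θ))) • (1 / √((b - x) * (x - a))) • f x = -(2 : ℝ) • f x := by
  have hsin : 0 < sin θ := sin_pos_of_pos_of_lt_pi hθ.1 (by linarith [hθ.2, pi_pos])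
  have hcos : 0 < cos θ := cos_pos_of_mem_Ioo ⟨by linarith [hθ.1, pi_pos], hθ.2⟩
  have hpos : 0 < (b - a) * sin θ * cos θ := by
    have := sub_pos.2 hab
    positivity
  have hsq : (b - x) * (x - a) = ((b - a) * sin θ * cos θ) ^ 2 := by
    rw [mul_pow _ (cos θ), cos_sq', ← hx]
    ring
  rw [hsq, sqrt_sq hpos.le, smul_smul, neg_mul, mul_assoc, mul_one_div_cancel hpos.ne', mul_one]

theorem deriv_sub_mul_sin_sq_nonpos (hab : a ≤ b) {θ : ℝ} (hθ : θ ∈ Ioo 0 (π / 2)) :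
    -(2 * ((b - a) * sin θ * cos θ)) ≤ 0 := by
  have hsin : 0 ≤ sin θ := sin_nonneg_of_nonneg_of_le_pi hθ.1.le (by linarith [hθ.2, pi_pos])
  have hcos : 0 ≤ cos θ := cos_nonneg_of_mem_Icc ⟨by linarith [hθ.1, pi_pos], hθ.2.le⟩
  have := sub_nonneg.2 hab
  rw [neg_nonpos]
  positivity

theorem integrableOn_one_div_sqrt_sub_mul_sub_smul_iff (hab : a < b) (f : ℝ → E) :
    IntegrableOn (fun x => (1 / √((b - x) * (x - a))) • f x) (Ioo a b) ↔
      IntegrableOn (fun θ => f (b - (b - a) * sin θ ^ 2)) (Ioo 0 (π / 2)) := by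
  have h := integrableOn_Icc_deriv_smul_iff_of_deriv_nonpos
    (f := fun θ => b - (b - a) * sin θ ^ 2) (g := fun x => (1 / √((b - x) * (x - a))) • f x)
    (by fun_prop) (fun θ _ => hasDerivAt_sub_mul_sin_sq a b θ)
    (fun θ => deriv_sub_mul_sin_sq_nonpos hab.le) (by positivity : 0 ≤ π / 2)
  rw [integrableOn_Icc_iff_integrableOn_Ioo, integrableOn_Icc_iff_integrableOn_Ioo,
    integrableOn_congr_fun
      (fun θ hθ => deriv_smul_one_div_sqrt_sub_mul_sub_smul hab f hθ rfl) measurableSet_Ioo] at h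
  simp only [sin_zero, sin_pi_div_two, one_pow, mul_one, sub_sub_cancel, zero_pow two_ne_zero,
    mul_zero, sub_zero] at h
  exact h.symm.trans (integrable_fun_smul_iff (neg_ne_zero.2 two_ne_zero) _)

theorem integral_one_div_sqrt_sub_mul_sub_smul (hab : a < b) (f : ℝ → E) :
    ∫ x in Ioo a b, (1 / √((b - x) * (x - a))) • f x =
      (2 : ℝ) • ∫ θ in Ioo 0 (π / 2), f (b - (b - a) * sin θ ^ 2) := by
  have h := integral_Icc_deriv_smul_of_deriv_nonpos
    (f := fun θ => b - (b - a) * sin θ ^ 2) (g := fun x => (1 / √((b - x) * (x - a))) • f x)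
    (by fun_prop) (fun θ _ => hasDerivAt_sub_mul_sin_sq a b θ)
    (fun θ => deriv_sub_mul_sin_sq_nonpos hab.le) (by positivity : 0 ≤ π / 2)
  rw [integral_Icc_eq_integral_Ioo, integral_Icc_eq_integral_Ioo,
    setIntegral_congr_fun measurableSet_Ioo
      fun θ hθ => deriv_smul_one_div_sqrt_sub_mul_sub_smul hab f hθ rfl,
    integral_smul, neg_smul] at h
  simpa only [sin_zero, sin_pi_div_two, one_pow, mul_one, sub_sub_cancel, zero_pow two_ne_zero,
    mul_zero, sub_zero, neg_inj] using h.symm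

end SineSubstitution

/-- The complete elliptic integral of the first kind `K`, as a function of the parameter `m = k²`
rather than of the modulus `k`. -/
noncomputable def ellipticK (m : ℝ) : ℝ :=
  ∫ θ in Ioo 0 (π / 2), 1 / √(1 - m * sin θ ^ 2)

theorem abs_mul_sin_sq_le (m θ : ℝ) : |m * sin θ ^ 2| ≤ |m| := by
  rw [abs_mul, abs_of_nonneg (sq_nonneg (sin θ))]
  exact mul_le_of_le_one_right (abs_nonneg m) (sin_sq_le_one θ)

theorem one_sub_mul_sin_sq_pos {m : ℝ} (hm : m < 1) (θ : ℝ) : 0 < 1 - m * sin θ ^ 2 := by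
  rcases le_total m 0 with hm0 | hm0
  · linarith [mul_nonpos_of_nonpos_of_nonneg hm0 (sq_nonneg (sin θ))]
  · linarith [mul_le_of_le_one_right hm0 (sin_sq_le_one θ)]

theorem integrableOn_one_div_sqrt_one_sub_mul_sin_sq {m : ℝ} (hm : m < 1) :
    IntegrableOn (fun θ => 1 / √(1 - m * sin θ ^ 2)) (Ioo 0 (π / 2)) := by
  have hcont : Continuous fun θ => 1 / √(1 - m * sin θ ^ 2) :=
    continuous_const.div (by fun_prop) fun θ => (sqrt_pos.2 (one_sub_mul_sin_sq_pos hm θ)).ne'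
  exact hcont.integrableOn_Icc.mono_set Ioo_subset_Icc_self

section ThreeRealRoots

variable {a b c : ℝ}

theorem one_div_sqrt_sub_mul_sin_sq_sub (hcb : c < b) (θ : ℝ) :
    1 / √(b - (b - a) * sin θ ^ 2 - c) =
      1 / √(b - c) * (1 / √(1 - (b - a) / (b - c) * sin θ ^ 2)) := by
  have hbc : 0 < b - c := sub_pos.2 hcb
  have hfac : b - (b - a) * sin θ ^ 2 - c = (b - c) * (1 - (b - a) / (b - c) * sin θ ^ 2) := by
    field_simp
    ring
  rw [hfac, sqrt_mul hbc.le, one_div_mul_one_div]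

theorem one_div_sqrt_cubic_eqOn (hca : c ≤ a) :
    EqOn (fun x => 1 / √((x - c) * (b - x) * (x - a)))
      (fun x => (1 / √((b - x) * (x - a))) • (1 / √(x - c))) (Ioo a b) := by
  intro x hx
  have hxc : 0 ≤ x - c := by linarith [hx.1]
  simp only [smul_eq_mul]
  rw [mul_assoc, sqrt_mul hxc, one_div_mul_one_div_rev]

theorem integrableOn_one_div_sqrt_cubic (hca : c < a) (hab : a < b) :
    IntegrableOn (fun x => 1 / √((x - c) * (b - x) * (x - a))) (Ioo a b) := by
  have hparam : (b - a) / (b - c) < 1 := by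
    rw [div_lt_one (by linarith)]
    linarith
  rw [integrableOn_congr_fun (one_div_sqrt_cubic_eqOn hca.le) measurableSet_Ioo,
    integrableOn_one_div_sqrt_sub_mul_sub_smul_iff hab fun x => 1 / √(x - c)]
  simp only [one_div_sqrt_sub_mul_sin_sq_sub (hca.trans hab)]
  exact (integrableOn_one_div_sqrt_one_sub_mul_sin_sq hparam).const_mul _

theorem integral_one_div_sqrt_cubic (hca : c < a) (hab : a < b) :
    ∫ x in Ioo a b, 1 / √((x - c) * (b - x) * (x - a)) =
      2 / √(b - c) * ellipticK ((b - a) / (b - c)) := by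
  rw [setIntegral_congr_fun measurableSet_Ioo (one_div_sqrt_cubic_eqOn hca.le),
    integral_one_div_sqrt_sub_mul_sub_smul hab fun x => 1 / √(x - c)]
  simp only [one_div_sqrt_sub_mul_sin_sq_sub (hca.trans hab)]
  rw [integral_const_mul, ellipticK, smul_eq_mul]
  ring

end ThreeRealRoots

section PochhammerCoefficients

variable {𝕜 : Type*} [Field 𝕜] [CharZero 𝕜]

theorem ring_choose_add_natCast_sub_one (a : 𝕜) (n : ℕ) :
    Ring.choose (a + n - 1) n = (ascPochhammer 𝕜 n).eval a / n.factorial := by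
  rw [eq_div_iff (Nat.cast_ne_zero.2 n.factorial_ne_zero), mul_comm, ← nsmul_eq_mul, Ring.choose,
    Ring.factorial_nsmul_multichoose_eq_ascPochhammer, Polynomial.ascPochhammer_smeval_eq_eval]
  congr 1
  ring

theorem ascPochhammer_eval_half_div_factorial (n : ℕ) :
    (ascPochhammer 𝕜 n).eval (1 / 2) / n.factorial =
      ∏ i ∈ Finset.range n, (2 * (i : 𝕜) + 1) / (2 * i + 2) := by
  induction n with
  | zero => simp
  | succ k ih =>
    rw [Finset.prod_range_succ, ← ih, ascPochhammer_succ_eval, Nat.factorial_succ]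
    push_cast
    have hfact : (k.factorial : 𝕜) ≠ 0 := Nat.cast_ne_zero.2 k.factorial_ne_zero
    have hsucc : (k : 𝕜) + 1 ≠ 0 := Nat.cast_add_one_ne_zero k
    rw [show 2 * (k : 𝕜) + 2 = 2 * (k + 1) by ring]
    field_simp
    ring

end PochhammerCoefficients

section PowerSeries

variable {E : Type*} [NormedAddCommGroup E] [NormedSpace ℝ E]

theorem hasSum_one_div_one_sub_rpow (a : ℝ) {y : ℝ} (hy : |y| < 1) :
    HasSum (fun n : ℕ => (ascPochhammer ℝ n).eval a / n.factorial * y ^ n)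
      (1 / (1 - y) ^ a) := by
  have hmem : y ∈ Metric.eball (0 : ℝ) 1 := by
    rw [← ENNReal.ofReal_one, Metric.eball_ofReal]
    simpa using hy
  simpa only [zero_add, FormalMultilinearSeries.ofScalars_apply_eq,
    ring_choose_add_natCast_sub_one, smul_eq_mul] using
    (one_div_one_sub_rpow_hasFPowerSeriesOnBall_zero a).hasSum hmem

theorem hasSum_one_div_sqrt_one_sub {y : ℝ} (hy : |y| < 1) :
    HasSum (fun n : ℕ => (ascPochhammer ℝ n).eval (1 / 2) / n.factorial * y ^ n)
      (1 / √(1 - y)) := by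
  simpa only [sqrt_eq_rpow] using hasSum_one_div_one_sub_rpow (1 / 2) hy

theorem integral_comp_sin_eq_integral_comp_cos (f : ℝ → E) :
    ∫ θ in 0..π / 2, f (sin θ) = ∫ θ in 0..π / 2, f (cos θ) := by
  simpa only [cos_pi_div_two_sub, sub_self, sub_zero] using
    intervalIntegral.integral_comp_sub_left (a := 0) (b := π / 2) (fun θ => f (cos θ)) (π / 2)

theorem integral_sin_pow_two_mul (n : ℕ) :
    ∫ θ in 0..π / 2, sin θ ^ (2 * n) =
      π / 2 * ((ascPochhammer ℝ n).eval (1 / 2) / n.factorial) := by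
  rw [integral_comp_sin_eq_integral_comp_cos (· ^ (2 * n)), EulerSine.integral_cos_pow_eq,
    integral_sin_pow_even, ascPochhammer_eval_half_div_factorial]
  ring

theorem hasSum_integral_comp_mul_sin_sq [CompleteSpace E] {u : ℕ → E} {f : ℝ → E} {m : ℝ}
    (hu : Summable fun n => |m| ^ n * ‖u n‖)
    (hf : ∀ θ, HasSum (fun n => (m * sin θ ^ 2) ^ n • u n) (f (m * sin θ ^ 2))) :
    HasSum (fun n : ℕ => (π / 2 * ((ascPochhammer ℝ n).eval (1 / 2) / n.factorial) * m ^ n) • u n)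
      (∫ θ in 0..π / 2, f (m * sin θ ^ 2)) := by
  have hbound (n : ℕ) (θ : ℝ) : ‖(m * sin θ ^ 2) ^ n • u n‖ ≤ |m| ^ n * ‖u n‖ := by
    rw [norm_smul, norm_pow, norm_eq_abs]
    exact mul_le_mul_of_nonneg_right
      (pow_le_pow_left₀ (abs_nonneg _) (abs_mul_sin_sq_le m θ) n) (norm_nonneg _)
  have hterm (n : ℕ) : ∫ θ in 0..π / 2, (m * sin θ ^ 2) ^ n • u n =
      (π / 2 * ((ascPochhammer ℝ n).eval (1 / 2) / n.factorial) * m ^ n) • u n := by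
    simp only [mul_pow, ← pow_mul]
    rw [intervalIntegral.integral_smul_const, intervalIntegral.integral_const_mul,
      integral_sin_pow_two_mul, mul_comm (m ^ n)]
  simpa only [hterm] using intervalIntegral.hasSum_integral_of_dominated_convergence
    (μ := volume) (a := 0) (b := π / 2) (F := fun n θ => (m * sin θ ^ 2) ^ n • u n)
    (fun n _ => |m| ^ n * ‖u n‖) (fun n => by fun_prop)
    (fun n => .of_forall fun θ _ => hbound n θ) (.of_forall fun _ _ => hu) (by simp)
    (.of_forall fun θ _ => hf θ)

theorem hasSum_ellipticK {m : ℝ} (hm : |m| < 1) :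
    HasSum (fun n => π / 2 * (aCoef n * m ^ n)) (ellipticK m) := by
  have hsummable :
      Summable fun n : ℕ => |m| ^ n * ‖(ascPochhammer ℝ n).eval (1 / 2) / n.factorial‖ := by
    simpa only [norm_mul, norm_pow, norm_eq_abs, mul_comm] using
      (hasSum_one_div_sqrt_one_sub hm).summable.norm
  have hintegral := hasSum_integral_comp_mul_sin_sq (f := fun y => 1 / √(1 - y)) hsummable
    fun θ => by
      simpa only [smul_eq_mul, mul_comm] using
        hasSum_one_div_sqrt_one_sub ((abs_mul_sin_sq_le m θ).trans_lt hm)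
  rw [ellipticK, ← integral_Ioc_eq_integral_Ioo, ← intervalIntegral.integral_of_le (by positivity)]
  refine hintegral.congr_fun fun n => ?_
  rw [aCoef, smul_eq_mul]
  ring

end PowerSeries

/-- for `0 < t < 1` the elliptic integral `∫_t^1 dx/√(x(1-x)(x-t))`
converges and equals `π·₂F₁(1/2,1/2,1;1-t) = π·∑ ((1/2)_n/n!)² (1-t)ⁿ`. -/
theorem stmt_12 (t : ℝ) (ht0 : 0 < t) (ht1 : t < 1) :
    MeasureTheory.IntegrableOn
      (fun x : ℝ => 1 / Real.sqrt (x * (1 - x) * (x - t))) (Set.Ioo t 1) ∧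
    (∫ x in Set.Ioo t (1 : ℝ), 1 / Real.sqrt (x * (1 - x) * (x - t)))
      = Real.pi * ∑' n : ℕ, aCoef n * (1 - t) ^ n := by
  have hperiod := integral_one_div_sqrt_cubic ht0 ht1
  have hseries : ellipticK (1 - t) = π / 2 * ∑' n : ℕ, aCoef n * (1 - t) ^ n := by
    have hparam : |1 - t| < 1 := abs_lt.2 ⟨by linarith, by linarith⟩
    rw [← (hasSum_ellipticK hparam).tsum_eq, tsum_mul_left]
  simp only [sub_zero, sqrt_one, div_one] at hperiod
  refine ⟨by simpa only [sub_zero] using integrableOn_one_div_sqrt_cubic ht0 ht1, ?_⟩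
  rw [hperiod, hseries]
  ring
end

section
/- The limit lim_{ε → 0⁺} ( Γ(1−ε)·Γ(ε)/Γ(1/2)² + Γ(1−ε)·Γ(−ε)/Γ(1/2−ε)² ) exists and equals 4·log(2)/π, where Γ is the real Gamma function and log is the natural logarithm. -/
/-!
The function `Γ` has a simple pole at `0` with residue `1` and constant term `-γ`, so for `f`
differentiable at `0` the product `Γ(ε) f(ε)` is `f(0) / ε + (f'(0) - γ f(0)) + o(1)`. Hence in
`Γ(ε) f(ε) + Γ(-ε) g(ε)` with `f(0) = g(0)` the poles cancel and the constant terms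
`f'(0) - g'(0) - 2 γ f(0)` remain. For the coefficient in Kummer's formula with parameters
`a = s - ε`, `b = t - ε`, `c = s + t - ε`, this gives
`-Γ(s + t) / (Γ(s) Γ(t)) * (2 γ + ψ(s) + ψ(t))` with `ψ = Γ' / Γ`; finally
`ψ(1 / 2) = -γ - 2 log 2`.
-/

section

open Filter Real Topology

section PoleAtZero

variable {E : Type*} [NormedAddCommGroup E] [NormedSpace ℝ E] {f g : ℝ → E} {f' g' : E}

lemma tendsto_Gamma_smul_sub_inv_smul (hf : HasDerivAt f f' 0) :
    Tendsto (fun ε ↦ Gamma ε • f ε - ε⁻¹ • f 0) (𝓝[≠] 0)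
      (𝓝 (f' - eulerMascheroniConstant • f 0)) := by
  have hasDerivAt_Gamma_add_one :
      HasDerivAt (fun ε ↦ Gamma (ε + 1)) (-eulerMascheroniConstant) 0 :=
    HasDerivAt.comp_add_const 0 1 (by simpa only [zero_add] using hasDerivAt_Gamma_one)
  have hasDerivAt_smul :
      HasDerivAt (fun ε ↦ Gamma (ε + 1) • f ε) (f' - eulerMascheroniConstant • f 0) 0 := by
    simpa [sub_eq_add_neg] using hasDerivAt_Gamma_add_one.fun_smul hf
  refine hasDerivAt_smul.tendsto_slope_zero.congr' ?_
  filter_upwards [self_mem_nhdsWithin] with ε (ε_ne : ε ≠ 0)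
  rw [zero_add, zero_add, Gamma_one, one_smul, Gamma_add_one ε_ne, smul_sub, smul_smul,
    inv_mul_cancel_left₀ ε_ne]

lemma tendsto_Gamma_smul_add_Gamma_neg_smul (hf : HasDerivAt f f' 0) (hg : HasDerivAt g g' 0)
    (hfg : f 0 = g 0) :
    Tendsto (fun ε ↦ Gamma ε • f ε + Gamma (-ε) • g ε) (𝓝[≠] 0)
      (𝓝 (f' - g' - (2 * eulerMascheroniConstant) • f 0)) := by
  have hasDerivAt_reflect : HasDerivAt (fun ε ↦ g (-ε)) (-g') 0 := by
    simpa only [zero_sub] using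
      HasDerivAt.comp_const_sub (0 : ℝ) 0 (by simpa only [sub_zero] using hg)
  have tendsto_neg : Tendsto (fun ε : ℝ ↦ -ε) (𝓝[≠] 0) (𝓝[≠] 0) :=
    tendsto_nhdsWithin_iff.2
      ⟨(continuous_neg.tendsto' 0 0 neg_zero).mono_left nhdsWithin_le_nhds,
        eventually_mem_nhdsWithin.mono fun _ ε_ne ↦ neg_ne_zero.2 ε_ne⟩
  convert! (tendsto_Gamma_smul_sub_inv_smul hf).add
    ((tendsto_Gamma_smul_sub_inv_smul hasDerivAt_reflect).comp tendsto_neg) using 2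
  · simp only [Function.comp_apply, neg_neg, neg_zero, inv_neg, neg_smul, hfg]
    abel
  · rw [neg_zero, ← hfg]
    module

end PoleAtZero

lemma hasDerivAt_inv_Gamma_sub {s : ℝ} (hs : ∀ m : ℕ, s ≠ -m) :
    HasDerivAt (fun ε ↦ (Gamma (s - ε))⁻¹) (logDeriv Gamma s / Gamma s) 0 := by
  have hasDerivAt_Gamma_sub : HasDerivAt (fun ε ↦ Gamma (s - ε)) (-deriv Gamma s) 0 :=
    HasDerivAt.comp_const_sub s 0
      (by simpa only [sub_zero] using (differentiableAt_Gamma hs).hasDerivAt)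
  have Gamma_ne : Gamma s ≠ 0 := Gamma_ne_zero hs
  refine (hasDerivAt_Gamma_sub.fun_inv (by rwa [sub_zero])).congr_deriv ?_
  rw [sub_zero, neg_neg, logDeriv_apply, div_div, sq]

lemma tendsto_kummer_connection_coeff {s t : ℝ} (hs : ∀ m : ℕ, s ≠ -m) (ht : ∀ m : ℕ, t ≠ -m)
    (hst : ∀ m : ℕ, s + t ≠ -m) :
    Tendsto
      (fun ε ↦ Gamma (s + t - ε) * Gamma ε / (Gamma s * Gamma t) +
        Gamma (s + t - ε) * Gamma (-ε) / (Gamma (s - ε) * Gamma (t - ε)))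
      (𝓝[≠] 0)
      (𝓝 (-(Gamma (s + t) / (Gamma s * Gamma t)) *
        (2 * eulerMascheroniConstant + logDeriv Gamma s + logDeriv Gamma t))) := by
  have tendsto_Gamma_sub :
      Tendsto (fun ε ↦ Gamma (s + t - ε)) (𝓝[≠] 0) (𝓝 (Gamma (s + t))) := by
    have continuousAt_Gamma : ContinuousAt Gamma (s + t - 0) := by
      simpa only [sub_zero] using (differentiableAt_Gamma hst).continuousAt
    have continuousAt_Gamma_sub : ContinuousAt (fun ε ↦ Gamma (s + t - ε)) 0 :=
      continuousAt_Gamma.comp' (by fun_prop)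
    simpa only [sub_zero] using continuousAt_Gamma_sub.tendsto.mono_left nhdsWithin_le_nhds
  have tendsto_bracket := tendsto_Gamma_smul_add_Gamma_neg_smul
    (hasDerivAt_const 0 ((Gamma s)⁻¹ * (Gamma t)⁻¹))
    ((hasDerivAt_inv_Gamma_sub hs).fun_mul (hasDerivAt_inv_Gamma_sub ht))
    (by simp only [sub_zero])
  convert! tendsto_Gamma_sub.mul tendsto_bracket using 2
  · simp only [smul_eq_mul, div_eq_mul_inv, mul_inv]
    ring
  · simp only [smul_eq_mul, sub_zero, div_eq_mul_inv, mul_inv]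
    ring

lemma logDeriv_Gamma_one_half :
    logDeriv Gamma (1 / 2) = -eulerMascheroniConstant - 2 * log 2 := by
  rw [logDeriv_apply, hasDerivAt_Gamma_one_half.deriv, Gamma_one_half_eq]
  field_simp
  ring

end

/-- `lim_{ε→0⁺} ( Γ(1-ε)Γ(ε)/Γ(1/2)² + Γ(1-ε)Γ(-ε)/Γ(1/2-ε)² ) = 4·log(2)/π`. -/
theorem stmt_15 :
    Filter.Tendsto
      (fun ε : ℝ =>
        Real.Gamma (1 - ε) * Real.Gamma ε / (Real.Gamma (1 / 2)) ^ 2 +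
          Real.Gamma (1 - ε) * Real.Gamma (-ε) / (Real.Gamma (1 / 2 - ε)) ^ 2)
      (nhdsWithin 0 (Set.Ioi 0)) (nhds (4 * Real.log 2 / Real.pi)) := by
  have half_ne (m : ℕ) : (1 / 2 : ℝ) ≠ -m := by linarith [m.cast_nonneg (α := ℝ)]
  have half_add_half_ne (m : ℕ) : (1 / 2 + 1 / 2 : ℝ) ≠ -m := by
    linarith [m.cast_nonneg (α := ℝ)]
  have sq_Gamma_half : Real.Gamma (1 / 2) ^ 2 = Real.pi := by
    rw [Real.Gamma_one_half_eq, Real.sq_sqrt Real.pi_pos.le]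
  have limit := (tendsto_kummer_connection_coeff half_ne half_ne half_add_half_ne).mono_left
    (nhdsGT_le_nhdsNE 0)
  simp only [add_halves, ← sq] at limit
  convert! limit using 2
  rw [Real.Gamma_one, sq_Gamma_half, logDeriv_Gamma_one_half]
  ring
end

section
/- For every real t > 0 and every natural number n, the limit as ε → 0 (ε real, ε ≠ 0, ε → 0) of (1/ε)·( t^ε·(1/2)_n² / (1+ε)_n − (1/2−ε)_n² / (1−ε)_n ) exists and equals ((1/2)_n² / n!)·( log(t) + Σ_{k=1}^{n} 1/(k(k−1/2)) ), where (x)_n = x(x+1)⋯(x+n−1) denotes the Pochhammer symbol (for real x) and t^ε = exp(ε·log t). -/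
/-!
Both terms of the difference take the value `(1/2)_n² / n!` at `ε = 0`, so the limit is the
difference of their derivatives there. Since `(x)_n` has logarithmic derivative
`∑ k < n, 1/(x + k)`, the logarithmic derivatives of the two terms are `log t - H_n` and
`H_n - 2 ∑ k < n, 1/(1/2 + k)`, with `H_n` the `n`-th harmonic number; partial fractions combine
the sums.
-/

section LogarithmicDerivative

variable {𝕜 : Type*} [NontriviallyNormedField 𝕜] {n : ℕ}

theorem hasDerivAt_eval_ascPochhammer {x : 𝕜} (hx : (ascPochhammer 𝕜 n).eval x ≠ 0) :
    HasDerivAt (fun y => (ascPochhammer 𝕜 n).eval y)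
      ((ascPochhammer 𝕜 n).eval x * ∑ k ∈ Finset.range n, (x + k)⁻¹) x := by
  induction n with
  | zero => simpa using hasDerivAt_const x (1 : 𝕜)
  | succ n ih =>
    rw [ascPochhammer_succ_eval] at hx
    obtain ⟨eval_ne, factor_ne⟩ := mul_ne_zero_iff.mp hx
    simp only [ascPochhammer_succ_eval]
    refine ((ih eval_ne).mul ((hasDerivAt_id' x).add_const (n : 𝕜))).congr_deriv ?_
    rw [Finset.sum_range_succ]
    field_simp

theorem hasDerivAt_eval_ascPochhammer_const_add {x : 𝕜} (hx : (ascPochhammer 𝕜 n).eval x ≠ 0) :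
    HasDerivAt (fun ε => (ascPochhammer 𝕜 n).eval (x + ε))
      ((ascPochhammer 𝕜 n).eval x * ∑ k ∈ Finset.range n, (x + k)⁻¹) 0 :=
  HasDerivAt.comp_const_add x 0 (by simpa using hasDerivAt_eval_ascPochhammer hx)

theorem hasDerivAt_eval_ascPochhammer_const_sub {x : 𝕜} (hx : (ascPochhammer 𝕜 n).eval x ≠ 0) :
    HasDerivAt (fun ε => (ascPochhammer 𝕜 n).eval (x - ε))
      (-((ascPochhammer 𝕜 n).eval x * ∑ k ∈ Finset.range n, (x + k)⁻¹)) 0 :=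
  HasDerivAt.comp_const_sub x 0 (by simpa using hasDerivAt_eval_ascPochhammer hx)

theorem hasDerivAt_mul_div_eval_ascPochhammer_const_add {u : 𝕜 → 𝕜} {u' γ : 𝕜}
    (hu : HasDerivAt u u' 0) (u_zero : u 0 = 1) (c : 𝕜)
    (hγ : (ascPochhammer 𝕜 n).eval γ ≠ 0) :
    HasDerivAt (fun ε => u ε * c / (ascPochhammer 𝕜 n).eval (γ + ε))
      (c / (ascPochhammer 𝕜 n).eval γ * (u' - ∑ k ∈ Finset.range n, (γ + k)⁻¹)) 0 := by
  refine ((hu.mul_const c).div (hasDerivAt_eval_ascPochhammer_const_add hγ)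
    (by simpa using hγ)).congr_deriv ?_
  simp only [u_zero, add_zero]
  field_simp

theorem hasDerivAt_eval_ascPochhammer_const_sub_mul_div {α β γ : 𝕜}
    (hα : (ascPochhammer 𝕜 n).eval α ≠ 0) (hβ : (ascPochhammer 𝕜 n).eval β ≠ 0)
    (hγ : (ascPochhammer 𝕜 n).eval γ ≠ 0) :
    HasDerivAt
      (fun ε => (ascPochhammer 𝕜 n).eval (α - ε) * (ascPochhammer 𝕜 n).eval (β - ε) /
        (ascPochhammer 𝕜 n).eval (γ - ε))
      ((ascPochhammer 𝕜 n).eval α * (ascPochhammer 𝕜 n).eval β / (ascPochhammer 𝕜 n).eval γ *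
        (∑ k ∈ Finset.range n, (γ + k)⁻¹ - ∑ k ∈ Finset.range n, (α + k)⁻¹ -
          ∑ k ∈ Finset.range n, (β + k)⁻¹)) 0 := by
  refine (((hasDerivAt_eval_ascPochhammer_const_sub hα).mul
    (hasDerivAt_eval_ascPochhammer_const_sub hβ)).div
      (hasDerivAt_eval_ascPochhammer_const_sub hγ) (by simpa using hγ)).congr_deriv ?_
  simp only [Pi.mul_apply, sub_zero]
  field_simp
  ring

/-- `u ε` stands for `t ^ ε`, and `u'` for `log t`. -/
theorem stmt_16_general {u : 𝕜 → 𝕜} {u' α β γ : 𝕜} (hu : HasDerivAt u u' 0) (u_zero : u 0 = 1)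
    (hα : (ascPochhammer 𝕜 n).eval α ≠ 0) (hβ : (ascPochhammer 𝕜 n).eval β ≠ 0)
    (hγ : (ascPochhammer 𝕜 n).eval γ ≠ 0) :
    Filter.Tendsto
      (fun ε => (1 / ε) *
        (u ε * ((ascPochhammer 𝕜 n).eval α * (ascPochhammer 𝕜 n).eval β) /
            (ascPochhammer 𝕜 n).eval (γ + ε) -
          (ascPochhammer 𝕜 n).eval (α - ε) * (ascPochhammer 𝕜 n).eval (β - ε) /
            (ascPochhammer 𝕜 n).eval (γ - ε)))
      (nhdsWithin 0 {0}ᶜ)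
      (nhds ((ascPochhammer 𝕜 n).eval α * (ascPochhammer 𝕜 n).eval β /
          (ascPochhammer 𝕜 n).eval γ *
        (u' + ∑ k ∈ Finset.range n, ((α + k)⁻¹ + (β + k)⁻¹ - 2 * (γ + k)⁻¹)))) := by
  have difference_deriv := (hasDerivAt_mul_div_eval_ascPochhammer_const_add hu u_zero
    ((ascPochhammer 𝕜 n).eval α * (ascPochhammer 𝕜 n).eval β) hγ).sub
      (hasDerivAt_eval_ascPochhammer_const_sub_mul_div hα hβ hγ)
  convert difference_deriv.tendsto_slope_zero using 2
  · simp [u_zero]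
  · rw [Finset.sum_sub_distrib, Finset.sum_add_distrib, ← Finset.mul_sum]
    ring

end LogarithmicDerivative

theorem mul_sum_Icc_one_div_mul_sub {K : Type*} [Field K] [CharZero K] {a : K} {n : ℕ}
    (ha : ∀ k ∈ Finset.Icc 1 n, (k : K) ≠ a) :
    a * ∑ k ∈ Finset.Icc 1 n, 1 / ((k : K) * (k - a)) =
      ∑ k ∈ Finset.range n, ((1 - a + k)⁻¹ - (1 + k : K)⁻¹) := by
  have partial_fractions (k : ℕ) (hk : k ∈ Finset.Icc 1 n) :
      a * (1 / ((k : K) * (k - a))) = (k - a)⁻¹ - (k : K)⁻¹ := by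
    have cast_ne : (k : K) ≠ 0 := by
      exact_mod_cast Nat.one_le_iff_ne_zero.mp (Finset.mem_Icc.mp hk).1
    have sub_ne : (k : K) - a ≠ 0 := sub_ne_zero.mpr (ha k hk)
    field_simp
    ring
  rw [Finset.mul_sum, Finset.sum_congr rfl partial_fractions, ← Finset.Ico_add_one_right_eq_Icc,
    Finset.sum_Ico_eq_sum_range]
  refine Finset.sum_congr (by simp) fun k _ => ?_
  push_cast
  rw [add_sub_right_comm]

theorem sum_Icc_one_div_mul_sub_half (n : ℕ) :
    ∑ k ∈ Finset.Icc 1 n, 1 / ((k : ℝ) * ((k : ℝ) - 1 / 2)) =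
      ∑ k ∈ Finset.range n, ((1 / 2 + k : ℝ)⁻¹ + (1 / 2 + k : ℝ)⁻¹ - 2 * (1 + k : ℝ)⁻¹) := by
  have natCast_ne_half (k : ℕ) (hk : k ∈ Finset.Icc 1 n) : (k : ℝ) ≠ 1 / 2 :=
    (one_half_lt_one.trans_le (Nat.one_le_cast.mpr (Finset.mem_Icc.mp hk).1)).ne'
  calc
    _ = 2 * (1 / 2 * ∑ k ∈ Finset.Icc 1 n, 1 / ((k : ℝ) * ((k : ℝ) - 1 / 2))) := by ring
    _ = 2 * ∑ k ∈ Finset.range n, ((1 / 2 + k : ℝ)⁻¹ - (1 + k : ℝ)⁻¹) := by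
      rw [mul_sum_Icc_one_div_mul_sub natCast_ne_half, sub_half]
    _ = _ := by
      rw [Finset.mul_sum]
      exact Finset.sum_congr rfl fun k _ => by ring

/-- for `t > 0` and `n : ℕ`,
`lim_{ε→0, ε≠0} (1/ε)·( t^ε·(1/2)_n²/(1+ε)_n − (1/2−ε)_n²/(1−ε)_n )
  = ((1/2)_n²/n!)·( log t + ∑_{k=1}^n 1/(k(k−1/2)) )`. -/
theorem stmt_16 (t : ℝ) (ht : 0 < t) (n : ℕ) :
    Filter.Tendsto
      (fun ε : ℝ =>
        (1 / ε) *
          (t ^ ε * ((ascPochhammer ℝ n).eval (1 / 2)) ^ 2 /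
              (ascPochhammer ℝ n).eval (1 + ε) -
            ((ascPochhammer ℝ n).eval (1 / 2 - ε)) ^ 2 /
              (ascPochhammer ℝ n).eval (1 - ε)))
      (nhdsWithin 0 {(0 : ℝ)}ᶜ)
      (nhds (((ascPochhammer ℝ n).eval (1 / 2)) ^ 2 / n.factorial *
        (Real.log t + ∑ k ∈ Finset.Icc 1 n, 1 / ((k : ℝ) * ((k : ℝ) - 1 / 2))))) := by
  have half_ne : (ascPochhammer ℝ n).eval (1 / 2) ≠ 0 := (ascPochhammer_pos n _ one_half_pos).ne'
  have one_ne : (ascPochhammer ℝ n).eval 1 ≠ 0 := (ascPochhammer_pos n _ one_pos).ne'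
  have rpow_deriv : HasDerivAt (fun ε : ℝ => t ^ ε) (Real.log t) 0 := by
    simpa using (Real.hasStrictDerivAt_const_rpow ht 0).hasDerivAt
  simpa only [← sq, ascPochhammer_eval_one, sum_Icc_one_div_mul_sub_half] using
    stmt_16_general rpow_deriv (Real.rpow_zero t) half_ne half_ne one_ne
end
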